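/- arXiv:1901.09515 — 7 statements merged into one kernel-verified Lean document; each statement's English description precedes it below -/
import Mathlib

section
/- Let F : ℝ^d → ℝ be differentiable, G-Lipschitz, and DR-submodular, and let δ > 0. Then the δ-smoothed version F̃ of F is differentiable and DR-submodular: for all x ≤ y componentwise, ∇F̃(x) ≥ ∇F̃(y) componentwise. -/
open MeasureTheory

/-!
A Lipschitz bound on `F` dominates the difference quotients of `x ↦ F (x + δ v)` uniformly in `v`,
so `F̃` may be differentiated under the integral sign: `DF̃(x) = 𝔼_v [DF(x + δ v)]`. Each
coordinate of the gradient is the derivative along a basis vector, hence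
`∂ᵢF̃(x) = 𝔼_v [∂ᵢF(x + δ v)]`. Since `x ≤ y` implies `x + δ v ≤ y + δ v`, the DR inequality for
`F` holds pointwise in `v`, and integrating it gives the inequality for `F̃`.
-/

/-- The `δ`-smoothed version of `F : ℝ^d → ℝ`: `F̃ δ F x = 𝔼_{v ~ Unif(B^d)} [F (x + δ v)]`,
where `B^d` is the closed Euclidean unit ball. -/
noncomputable def smoothed {d : ℕ} (δ : ℝ) (F : EuclideanSpace ℝ (Fin d) → ℝ)
    (x : EuclideanSpace ℝ (Fin d)) : ℝ :=
  ∫ v, F (x + δ • v)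
    ∂(ProbabilityTheory.cond volume (Metric.closedBall (0 : EuclideanSpace ℝ (Fin d)) 1))

lemma gradient_apply_eq_fderiv {d : ℕ} (f : EuclideanSpace ℝ (Fin d) → ℝ)
    (x : EuclideanSpace ℝ (Fin d)) (i : Fin d) :
    gradient f x i = fderiv ℝ f x (EuclideanSpace.single i 1) := by
  have h := InnerProductSpace.toDual_symm_apply (𝕜 := ℝ)
    (x := EuclideanSpace.single i (1 : ℝ)) (y := fderiv ℝ f x)
  rw [EuclideanSpace.inner_single_right] at h
  simpa [gradient] using h

/-- Differentiation under the integral sign for an arbitrary finite measure `μ` that integrates the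
values of `F`. -/
lemma hasFDerivAt_integral_shift {d : ℕ} (δ : ℝ) {K : NNReal}
    {F : EuclideanSpace ℝ (Fin d) → ℝ} (hdiff : Differentiable ℝ F) (hK : LipschitzWith K F)
    (μ : Measure (EuclideanSpace ℝ (Fin d))) [IsFiniteMeasure μ]
    (x : EuclideanSpace ℝ (Fin d)) (hint : Integrable (fun v => F (x + δ • v)) μ) :
    Integrable (fun v => fderiv ℝ F (x + δ • v)) μ ∧
      HasFDerivAt (fun x => ∫ v, F (x + δ • v) ∂μ) (∫ v, fderiv ℝ F (x + δ • v) ∂μ) x := by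
  have hcont : ∀ z : EuclideanSpace ℝ (Fin d), Continuous fun v => F (z + δ • v) := fun z =>
    hdiff.continuous.comp (by fun_prop)
  have hmeas : AEStronglyMeasurable (fun v => fderiv ℝ F (x + δ • v)) μ :=
    ((measurable_fderiv ℝ F).comp (by fun_prop)).aestronglyMeasurable
  refine ⟨Integrable.of_bound hmeas K
    (Filter.Eventually.of_forall fun v => norm_fderiv_le_of_lipschitz ℝ hK), ?_⟩
  refine hasFDerivAt_integral_of_dominated_of_fderiv_le
    (F := fun z v => F (z + δ • v)) (F' := fun z v => fderiv ℝ F (z + δ • v))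
    (bound := fun _ => (K : ℝ)) (s := Set.univ) Filter.univ_mem
    (Filter.Eventually.of_forall fun z => (hcont z).aestronglyMeasurable) hint hmeas
    (Filter.Eventually.of_forall fun v z _ => norm_fderiv_le_of_lipschitz ℝ hK)
    (integrable_const _) (Filter.Eventually.of_forall fun v z _ => ?_)
  exact (hasFDerivAt_comp_add_right (δ • v)).2 (hdiff (z + δ • v)).hasFDerivAt

/-- A continuous function is integrable for the uniform distribution on the closed unit ball. -/
lemma integrable_cond_closedBall {d : ℕ} {f : EuclideanSpace ℝ (Fin d) → ℝ} (hf : Continuous f) :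
    Integrable f (ProbabilityTheory.cond volume
      (Metric.closedBall (0 : EuclideanSpace ℝ (Fin d)) 1)) := by
  have h : IntegrableOn f (Metric.closedBall (0 : EuclideanSpace ℝ (Fin d)) 1) volume :=
    hf.continuousOn.integrableOn_compact (isCompact_closedBall _ _)
  exact h.smul_measure (ENNReal.inv_ne_top.2
    (Metric.measure_closedBall_pos volume _ one_pos).ne')

theorem smoothed_DR_submodular (d : ℕ) (G δ : ℝ) (hδ : 0 < δ)
    (F : EuclideanSpace ℝ (Fin d) → ℝ)
    (hdiff : Differentiable ℝ F)
    (hLip : ∀ x y : EuclideanSpace ℝ (Fin d), |F x - F y| ≤ G * ‖x - y‖)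
    (hDR : ∀ x y : EuclideanSpace ℝ (Fin d), (∀ i, x i ≤ y i) →
      ∀ i, gradient F y i ≤ gradient F x i) :
    Differentiable ℝ (smoothed δ F) ∧
      ∀ x y : EuclideanSpace ℝ (Fin d), (∀ i, x i ≤ y i) →
        ∀ i, gradient (smoothed δ F) y i ≤ gradient (smoothed δ F) x i := by
  have hK : LipschitzWith G.toNNReal F := LipschitzWith.of_dist_le_mul fun x y => by
    rw [Real.dist_eq, dist_eq_norm]
    exact (hLip x y).trans
      (mul_le_mul_of_nonneg_right (Real.le_coe_toNNReal G) (norm_nonneg _))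
  have key := fun x => hasFDerivAt_integral_shift δ hdiff hK
    (ProbabilityTheory.cond volume (Metric.closedBall (0 : EuclideanSpace ℝ (Fin d)) 1)) x
    (integrable_cond_closedBall (hdiff.continuous.comp (by fun_prop)))
  have hderiv : ∀ x, HasFDerivAt (smoothed δ F) _ x := fun x => (key x).2
  refine ⟨fun x => (hderiv x).differentiableAt, fun x y hxy i => ?_⟩
  rw [gradient_apply_eq_fderiv, gradient_apply_eq_fderiv, (hderiv x).fderiv, (hderiv y).fderiv,
    ContinuousLinearMap.integral_apply (key x).1, ContinuousLinearMap.integral_apply (key y).1]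
  refine integral_mono ((key y).1.apply_continuousLinearMap _)
    ((key x).1.apply_continuousLinearMap _) fun v => ?_
  have h := hDR (x + δ • v) (y + δ • v) (fun j => by simpa using hxy j) i
  rwa [gradient_apply_eq_fderiv, gradient_apply_eq_fderiv] at h
end

section
/- Let F : ℝ^d → ℝ be Lipschitz continuous and let δ > 0. Then the δ-smoothed version F̃ of F is differentiable and its gradient satisfies ∇F̃(x) = E_u[(d/δ) · F(x + δu) · u] for every x ∈ ℝ^d, where u is drawn uniformly at random from the Euclidean unit sphere S^{d−1} ⊂ ℝ^d. -/
open MeasureTheory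

/-- The uniform probability measure on the Euclidean unit sphere `S^{d-1} ⊂ ℝ^d`,
obtained by normalizing the natural surface measure. -/
noncomputable def sphereUniform (d : ℕ) :
    Measure (Metric.sphere (0 : EuclideanSpace ℝ (Fin d)) 1) :=
  (((volume : Measure (EuclideanSpace ℝ (Fin d))).toSphere Set.univ)⁻¹ •
    (volume : Measure (EuclideanSpace ℝ (Fin d))).toSphere)

/-!
The function `F` is only Lipschitz, so the derivative of `F̃` is obtained by differentiating under
the integral sign, using Rademacher's theorem (`hasFDerivAt_smoothed`). With `f v = F (x + δ v)`,
it remains to show `∫_B ∂ₑf = ∫_S ⟨u, e⟩ f(u) dσ(u)` (`setIntegral_lineDeriv_closedBall`), after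
which the constants match because `σ(S) = d · vol(B)`.

To avoid a divergence theorem on a domain with curved boundary, set
`K(R) = ∫ ∂ₑf(v) (R - ‖v‖)₊ dv` and differentiate it at `R = 1` in two ways. Since `∂_R (R - ‖v‖)₊` is the
indicator of the ball of radius `R`, the result is `∫_B ∂ₑf` (`hasDerivAt_integral_mul_cone`). On the
other hand, integration by parts for Lipschitz functions followed by polar coordinates gives
`K(R) = ∫₀ᴿ r^(d-1) ∫_S ⟨u, e⟩ f(ru) dσ(u) dr` (`integral_lineDeriv_mul_cone_eq`), whose
derivative at `R = 1` is the desired integral over the sphere by the fundamental theorem of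
calculus.
-/

section

open Set Metric
open scoped RealInnerProductSpace

theorem exists_lipschitzWith_comp_add_smul {V : Type*} [NormedAddCommGroup V] [NormedSpace ℝ V]
    {F : V → ℝ} {K : NNReal} (hF : LipschitzWith K F) (x : V) (δ : ℝ) :
    ∃ C, LipschitzWith C fun v ↦ F (x + δ • v) :=
  ⟨_, hF.comp ((LipschitzWith.const x).add (lipschitzWith_smul δ))⟩

/-- Up to sign, the derivative of the cone `v ↦ (R - ‖v‖)₊` in direction `e` is the `e`-component
of the unit radial field, cut off to the ball of radius `R`. -/
theorem lineDeriv_cone {V : Type*} [NormedAddCommGroup V] [InnerProductSpace ℝ V]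
    {R : ℝ} {v : V} (hv : v ≠ 0) (hvR : ‖v‖ ≠ R) (e : V) :
    lineDeriv ℝ (fun v : V ↦ max (R - ‖v‖) 0) v (-e) =
      (ball (0 : V) R).indicator (fun v ↦ ⟪v, e⟫ / ‖v‖) v := by
  apply HasLineDerivAt.lineDeriv
  rcases lt_or_gt_of_ne hvR with h | h
  · rw [indicator_of_mem (by simpa using h)]
    have h1 := (hasStrictFDerivAt_norm_sq v).hasFDerivAt.sqrt
      (pow_ne_zero 2 (norm_ne_zero_iff.2 hv))
    simp only [norm_nonneg, Real.sqrt_sq] at h1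
    have h2 := ((h1.const_sub R).congr_of_eventuallyEq (f₁ := fun v : V ↦ max (R - ‖v‖) 0) (by
      filter_upwards [(continuous_norm.tendsto v).eventually (gt_mem_nhds h)] with w hw
      exact max_eq_left (by linarith))).hasLineDerivAt (-e)
    convert h2 using 1
    have : ‖v‖ ≠ 0 := norm_ne_zero_iff.2 hv
    simp
    field_simp
  · rw [indicator_of_notMem (by simpa using h.le)]
    have h2 := ((hasFDerivAt_const (𝕜 := ℝ) (0 : ℝ) v).congr_of_eventuallyEq
      (f₁ := fun v : V ↦ max (R - ‖v‖) 0) (by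
      filter_upwards [(continuous_norm.tendsto v).eventually (lt_mem_nhds h)] with w hw
      exact max_eq_right (by linarith))).hasLineDerivAt (-e)
    simpa using h2

variable {E : Type*} [NormedAddCommGroup E] [InnerProductSpace ℝ E] [FiniteDimensional ℝ E]
  [MeasurableSpace E] [BorelSpace E]

/-- Integration in polar coordinates. -/
theorem integral_polar [Nontrivial E] (μ : Measure E) [μ.IsAddHaarMeasure] {g : E → ℝ}
    (hg : Integrable g μ) :
    ∫ x, g x ∂μ = ∫ r in Ioi (0 : ℝ), r ^ (Module.finrank ℝ E - 1) *
      ∫ u, g (r • (u : E)) ∂μ.toSphere := by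
  have key : ∀ x : ({(0)}ᶜ : Set E), (homeomorphUnitSphereProd E x).2.1 •
      (homeomorphUnitSphereProd E x).1.1 = x := by
    intro x
    have : ‖(x : E)‖ ≠ 0 := norm_ne_zero_iff.2 x.2
    simp [smul_smul, this]
  have hmp := μ.measurePreserving_homeomorphUnitSphereProd
  have hemb := (homeomorphUnitSphereProd E).measurableEmbedding
  have hint : Integrable (fun p : sphere (0 : E) 1 × Ioi (0 : ℝ) ↦ g (p.2.1 • p.1.1))
      (μ.toSphere.prod (.volumeIoiPow (Module.finrank ℝ E - 1))) := by
    rw [← hmp.integrable_comp_emb hemb]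
    simp only [Function.comp_def, key]
    have h := hg.integrableOn (s := ({0}ᶜ : Set E))
    rwa [integrableOn_iff_comap_subtypeVal (by measurability)] at h
  calc
    ∫ x, g x ∂μ = ∫ x : ({(0)}ᶜ : Set E), g x.1 ∂(μ.comap (↑)) := by
      rw [integral_subtype_comap (measurableSet_singleton _).compl g, restrict_compl_singleton]
    _ = ∫ p : sphere (0 : E) 1 × Ioi (0 : ℝ), g (p.2.1 • p.1.1)
          ∂μ.toSphere.prod (.volumeIoiPow (Module.finrank ℝ E - 1)) := by
      rw [← hmp.integral_comp hemb]
      simp only [key]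
    _ = ∫ r : Ioi (0 : ℝ), ∫ u, g (r.1 • (u : E)) ∂μ.toSphere
          ∂.volumeIoiPow (Module.finrank ℝ E - 1) := integral_prod_symm _ hint
    _ = _ := by
      simp only [Measure.volumeIoiPow, ENNReal.ofReal]
      rw [integral_withDensity_eq_integral_smul,
        integral_subtype_comap measurableSet_Ioi fun a ↦
          Real.toNNReal (a ^ (Module.finrank ℝ E - 1)) • ∫ u, g (a • (u : E)) ∂μ.toSphere,
        setIntegral_congr_fun measurableSet_Ioi fun x hx ↦ ?_]
      · rw [NNReal.smul_def, Real.coe_toNNReal _ (pow_nonneg hx.out.le _), smul_eq_mul]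
      · exact (measurable_subtype_coe.pow_const _).real_toNNReal

/-- Integration by parts against the cone `v ↦ (R - ‖v‖)₊`. -/
theorem integral_lineDeriv_mul_cone [Nontrivial E] (μ : Measure E) [μ.IsAddHaarMeasure]
    {f : E → ℝ} {C : NNReal} (hf : LipschitzWith C f) (e : E) (R : ℝ) :
    ∫ v, lineDeriv ℝ f v e * max (R - ‖v‖) 0 ∂μ =
      ∫ v, (ball (0 : E) R).indicator (fun v ↦ ⟪v, e⟫ / ‖v‖ * f v) v ∂μ := by
  have hlip : LipschitzWith 1 (fun v : E ↦ max (R - ‖v‖) 0) := by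
    refine LipschitzWith.max_const (LipschitzWith.of_dist_le_mul fun x y ↦ ?_) 0
    rw [dist_sub_left, NNReal.coe_one, one_mul]
    exact (dist_norm_norm_le x y).trans_eq (dist_eq_norm x y).symm
  have hcpt : HasCompactSupport (fun v : E ↦ max (R - ‖v‖) 0) := by
    refine HasCompactSupport.of_support_subset_isCompact (isCompact_closedBall (0 : E) R) ?_
    intro v hv
    by_contra h
    exact hv (max_eq_right (by simp at h; linarith))
  rw [hf.integral_lineDeriv_mul_eq hlip hcpt]
  refine integral_congr_ae ?_
  have h0 : ∀ᵐ v ∂μ, v ≠ (0 : E) := by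
    simp [ae_iff]
  have h1 : ∀ᵐ v ∂μ, v ∉ sphere (0 : E) R := measure_eq_zero_iff_ae_notMem.1
    (Measure.addHaar_sphere μ 0 R)
  filter_upwards [h0, h1] with v hv hv'
  rw [lineDeriv_cone hv (by simpa using hv')]
  simp only [indicator]
  split_ifs <;> simp

theorem continuous_sphereMean (μ : Measure E) [μ.IsAddHaarMeasure] {f : E → ℝ}
    (hf : Continuous f) (e : E) (n : ℕ) :
    Continuous fun r : ℝ ↦ r ^ n * ∫ u, ⟪(u : E), e⟫ * f (r • (u : E)) ∂μ.toSphere := by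
  refine (continuous_pow n).mul ?_
  have := continuous_parametric_integral_of_continuous (μ := μ.toSphere)
    (f := fun (r : ℝ) (u : sphere (0 : E) 1) ↦ ⟪(u : E), e⟫ * f (r • (u : E)))
    (by unfold Function.uncurry; fun_prop) isCompact_univ
  simpa using this

theorem integral_lineDeriv_mul_cone_eq [Nontrivial E] (μ : Measure E) [μ.IsAddHaarMeasure]
    {f : E → ℝ} {C : NNReal} (hf : LipschitzWith C f) (e : E) {R : ℝ} (hR : 0 ≤ R) :
    ∫ v, lineDeriv ℝ f v e * max (R - ‖v‖) 0 ∂μ =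
      ∫ r in (0 : ℝ)..R, r ^ (Module.finrank ℝ E - 1) *
        ∫ u, ⟪(u : E), e⟫ * f (r • (u : E)) ∂μ.toSphere := by
  have hfc : Continuous f := hf.continuous
  have hint : Integrable ((ball (0 : E) R).indicator (fun v ↦ ⟪v, e⟫ / ‖v‖ * f v)) μ := by
    rw [integrable_indicator_iff measurableSet_ball]
    have h1 : IntegrableOn f (ball (0 : E) R) μ :=
      (hfc.continuousOn.integrableOn_compact (isCompact_closedBall (0 : E) R)).mono_set
        ball_subset_closedBall
    refine Integrable.bdd_mul (c := ‖e‖) h1 ?_ (.of_forall fun v ↦ ?_)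
    · exact Measurable.aestronglyMeasurable (by fun_prop)
    · rw [norm_div, norm_norm]
      exact div_le_of_le_mul₀ (norm_nonneg _) (norm_nonneg _)
        ((norm_inner_le_norm v e).trans_eq (mul_comm _ _))
  rw [integral_lineDeriv_mul_cone μ hf, integral_polar μ hint,
    intervalIntegral.integral_of_le hR, integral_Ioc_eq_integral_Ioo,
    ← inter_eq_right.2 (Ioo_subset_Ioi_self (a := R) (b := (0 : ℝ))),
    ← setIntegral_indicator measurableSet_Ioo]
  refine setIntegral_congr_fun measurableSet_Ioi fun r (hr : 0 < r) ↦ ?_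
  have hn (u : sphere (0 : E) 1) : ‖r • (u : E)‖ = r := by simp [norm_smul, abs_of_pos hr]
  by_cases hrR : r < R
  · simp only [indicator, mem_ball_zero_iff, hn, hrR, mem_Ioo, hr, and_self, if_true]
    congr 2 with u
    rw [real_inner_smul_left, mul_div_cancel_left₀ _ hr.ne']
  · simp [indicator, hn, hrR, mem_Ioo]

/-- The derivative in `R` of `(R - ‖v‖)₊` is the indicator of the ball of radius `R`, so
differentiating the integral against the cone gives the integral over the ball. -/
theorem hasDerivAt_integral_mul_cone [Nontrivial E] (μ : Measure E) [μ.IsAddHaarMeasure]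
    {φ : E → ℝ} (hφ : AEStronglyMeasurable φ μ) {c : ℝ} (hc : ∀ v, ‖φ v‖ ≤ c) :
    HasDerivAt (fun R ↦ ∫ v, φ v * max (R - ‖v‖) 0 ∂μ)
      (∫ v in closedBall (0 : E) 1, φ v ∂μ) 1 := by
  have hc0 : 0 ≤ c := (norm_nonneg _).trans (hc 0)
  rw [← integral_indicator measurableSet_closedBall]
  refine (hasDerivAt_integral_of_dominated_loc_of_lip (s := Iio 2)
    (bound := (closedBall (0 : E) 2).indicator fun _ ↦ c) (Iio_mem_nhds (by norm_num))
    (F := fun R v ↦ φ v * max (R - ‖v‖) 0)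
    (.of_forall fun R ↦ hφ.mul (by fun_prop)) ?_ (hφ.indicator measurableSet_closedBall)
    (.of_forall fun v ↦ ?_) ?_ ?_).2
  · refine Integrable.bdd_mul (c := c) ?_ hφ (.of_forall hc)
    refine Continuous.integrable_of_hasCompactSupport (by fun_prop) ?_
    refine HasCompactSupport.of_support_subset_isCompact (isCompact_closedBall (0 : E) 1) ?_
    intro v hv
    by_contra h
    exact hv (max_eq_right (by simp at h; linarith))
  · refine LipschitzOnWith.of_dist_le_mul fun x (hx : x < 2) y (hy : y < 2) ↦ ?_
    by_cases hv : ‖v‖ ≤ 2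
    · rw [indicator_of_mem (by simpa using hv), dist_eq_norm, ← mul_sub, norm_mul,
        Real.coe_nnabs, abs_of_nonneg hc0, Real.dist_eq]
      refine mul_le_mul (hc v) ?_ (norm_nonneg _) hc0
      refine (abs_max_sub_max_le_abs _ _ _).trans_eq ?_
      congr 1; ring
    · have hx' : x - ‖v‖ ≤ 0 := by linarith
      have hy' : y - ‖v‖ ≤ 0 := by linarith
      simp only [max_eq_right hx', max_eq_right hy', dist_self]; positivity
  · rw [integrable_indicator_iff measurableSet_closedBall]
    exact integrableOn_const (measure_closedBall_lt_top.ne)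
  · have h1 : ∀ᵐ v ∂μ, v ∉ sphere (0 : E) 1 := measure_eq_zero_iff_ae_notMem.1
      (Measure.addHaar_sphere μ 0 1)
    filter_upwards [h1] with v hv
    replace hv : ‖v‖ ≠ 1 := by simpa using hv
    rcases lt_or_gt_of_ne hv with h | h
    · rw [indicator_of_mem (by simpa using h.le)]
      have h2 := (((hasDerivAt_id (1 : ℝ)).sub_const ‖v‖).const_mul (φ v)).congr_of_eventuallyEq
        (f₁ := fun R : ℝ ↦ φ v * max (R - ‖v‖) 0) (by
          filter_upwards [lt_mem_nhds h] with R hR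
          rw [max_eq_left (by linarith)]; rfl)
      simpa using h2
    · rw [indicator_of_notMem (by simpa using h)]
      refine (hasDerivAt_const (1 : ℝ) (0 : ℝ)).congr_of_eventuallyEq ?_
      filter_upwards [gt_mem_nhds h] with R hR
      rw [max_eq_right (by linarith), mul_zero]

/-- The divergence theorem on the unit ball for the field `f • e`, with `f` merely Lipschitz. -/
theorem setIntegral_lineDeriv_closedBall [Nontrivial E] (μ : Measure E) [μ.IsAddHaarMeasure]
    {f : E → ℝ} {C : NNReal} (hf : LipschitzWith C f) (e : E) :
    ∫ v in closedBall (0 : E) 1, lineDeriv ℝ f v e ∂μ =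
      ∫ u, ⟪(u : E), e⟫ * f u ∂μ.toSphere := by
  have h1 := hasDerivAt_integral_mul_cone μ (φ := fun v ↦ lineDeriv ℝ f v e)
    (measurable_lineDeriv hf.continuous).aestronglyMeasurable
    (fun v ↦ norm_lineDeriv_le_of_lipschitz ℝ hf)
  have hc := continuous_sphereMean μ hf.continuous e (Module.finrank ℝ E - 1)
  have h2 := (hc.integral_hasStrictDerivAt 0 1).hasDerivAt.congr_of_eventuallyEq
    (f₁ := fun R ↦ ∫ v, lineDeriv ℝ f v e * max (R - ‖v‖) 0 ∂μ) (by
      filter_upwards [lt_mem_nhds (zero_lt_one' ℝ)] with R hR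
      exact integral_lineDeriv_mul_cone_eq μ hf e hR.le)
  simpa using h1.unique h2

theorem integrable_fderiv {f : E → ℝ} {C : NNReal} (hf : LipschitzWith C f)
    {P : Measure E} [IsFiniteMeasure P] : Integrable (fderiv ℝ f) P :=
  .of_bound (measurable_fderiv ℝ f).aestronglyMeasurable C
    (.of_forall fun _ ↦ norm_fderiv_le_of_lipschitz ℝ hf)

/-- By Rademacher's theorem, the smoothed function may be differentiated under the integral. The
derivative is expressed through that of the rescaled function `v ↦ F (x + δ • v)`, which is also
the function to which the divergence theorem applies. -/
theorem hasFDerivAt_smoothed {d : ℕ} {δ : ℝ} (hδ : 0 < δ)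
    {F : EuclideanSpace ℝ (Fin d) → ℝ} {K : NNReal} (hF : LipschitzWith K F)
    (x : EuclideanSpace ℝ (Fin d)) :
    HasFDerivAt (smoothed δ F) (δ⁻¹ • ∫ v, fderiv ℝ (fun v ↦ F (x + δ • v)) v
      ∂(ProbabilityTheory.cond volume (closedBall (0 : EuclideanSpace ℝ (Fin d)) 1))) x := by
  obtain ⟨C, hf⟩ := exists_lipschitzWith_comp_add_smul hF x δ
  have hFc := hF.continuous
  have hP : ProbabilityTheory.cond volume (closedBall (0 : EuclideanSpace ℝ (Fin d)) 1) ≪ volume :=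
    ProbabilityTheory.cond_absolutelyContinuous
  rw [← integral_smul]
  refine (hasFDerivAt_integral_of_dominated_loc_of_lip (s := univ) (bound := fun _ ↦ (K : ℝ))
    Filter.univ_mem (.of_forall fun y ↦ ?_) ?_ ?_ (.of_forall fun v ↦ ?_)
    (integrable_const _) ?_).2
  · exact Continuous.aestronglyMeasurable (by fun_prop)
  · refine Integrable.smul_measure ?_ ?_
    · refine ContinuousOn.integrableOn_compact (isCompact_closedBall 0 1) ?_
      fun_prop
    · exact ENNReal.inv_ne_top.2 (measure_closedBall_pos _ _ one_pos).ne'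
  · exact ((measurable_fderiv ℝ _).const_smul δ⁻¹).aestronglyMeasurable
  · rw [lipschitzOnWith_univ]
    refine LipschitzWith.of_dist_le_mul fun y z ↦ ?_
    simpa using hF.dist_le_mul (y + δ • v) (z + δ • v)
  · filter_upwards [hP.ae_le (hf.ae_differentiableAt (μ := volume))] with v hv
    -- `F (y + δ • v)` is the rescaled function evaluated at `v + δ⁻¹ • (y - x)`.
    have h1 : HasFDerivAt (fun y ↦ v + δ⁻¹ • (y - x))
        (δ⁻¹ • ContinuousLinearMap.id ℝ (EuclideanSpace ℝ (Fin d))) x :=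
      (((hasFDerivAt_id x).sub_const x).const_smul δ⁻¹).const_add v
    have h2 : HasFDerivAt (fun v ↦ F (x + δ • v)) (fderiv ℝ (fun v ↦ F (x + δ • v)) v)
        (v + δ⁻¹ • (x - x)) := by simpa using hv.hasFDerivAt
    convert h2.comp x h1 using 1
    · ext y
      simp only [Function.comp_apply, smul_add, smul_smul, mul_inv_cancel₀ hδ.ne', one_smul]
      congr 1; abel
    · ext; simp

end

theorem gradient_smoothed_eq_sphere_integral (d : ℕ) (δ : ℝ) (hδ : 0 < δ)
    (F : EuclideanSpace ℝ (Fin d) → ℝ) (G : ℝ)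
    (hF : ∀ x y : EuclideanSpace ℝ (Fin d), |F x - F y| ≤ G * ‖x - y‖) :
    Differentiable ℝ (smoothed δ F) ∧
      ∀ x : EuclideanSpace ℝ (Fin d),
        gradient (smoothed δ F) x =
          ∫ u : Metric.sphere (0 : EuclideanSpace ℝ (Fin d)) 1,
            ((d : ℝ) / δ * F (x + δ • (u : EuclideanSpace ℝ (Fin d)))) •
              (u : EuclideanSpace ℝ (Fin d)) ∂(sphereUniform d) := by
  rcases Nat.eq_zero_or_pos d with rfl | hd
  -- In dimension zero the surface measure vanishes, but every vector is zero.
  · exact ⟨fun x ↦ (hasFDerivAt_of_subsingleton _ x).differentiableAt,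
      fun x ↦ Subsingleton.elim _ _⟩
  have : Nonempty (Fin d) := ⟨⟨0, hd⟩⟩
  have : Nontrivial (EuclideanSpace ℝ (Fin d)) := inferInstance
  have hFlip : LipschitzWith G.toNNReal F := LipschitzWith.of_dist_le_mul fun x y ↦ by
    rw [Real.dist_eq, dist_eq_norm]
    exact (hF x y).trans (by gcongr; exact Real.le_coe_toNNReal G)
  have key (x : EuclideanSpace ℝ (Fin d)) := hasFDerivAt_smoothed hδ hFlip x
  refine ⟨fun x ↦ (key x).differentiableAt, fun x ↦ ext_inner_right ℝ fun e ↦ ?_⟩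
  obtain ⟨C, hf⟩ := exists_lipschitzWith_comp_add_smul hFlip x δ
  set f : EuclideanSpace ℝ (Fin d) → ℝ := fun v ↦ F (x + δ • v) with hfdef
  have hint := integrable_fderiv hf
    (P := ProbabilityTheory.cond volume (Metric.closedBall (0 : EuclideanSpace ℝ (Fin d)) 1))
  have hdiff : ∀ᵐ v ∂(volume.restrict (Metric.closedBall (0 : EuclideanSpace ℝ (Fin d)) 1)),
      fderiv ℝ f v e = lineDeriv ℝ f v e := by
    filter_upwards [ae_restrict_of_ae (hf.ae_differentiableAt (μ := volume))] with v hv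
    exact hv.lineDeriv_eq_fderiv.symm
  have hsph : Integrable (fun u : Metric.sphere (0 : EuclideanSpace ℝ (Fin d)) 1 ↦
      ((d : ℝ) / δ * F (x + δ • (u : EuclideanSpace ℝ (Fin d)))) •
        (u : EuclideanSpace ℝ (Fin d))) (sphereUniform d) := by
    have hFc := hFlip.continuous
    refine Integrable.smul_measure ?_ ?_
    · exact Continuous.integrable_of_hasCompactSupport (by fun_prop) (.of_compactSpace _)
    · simp [hd.ne', (Metric.measure_ball_pos volume _ one_pos).ne']
  rw [inner_gradient_left, (key x).fderiv, real_inner_comm, ← integral_inner hsph]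
  rw [smul_apply, ContinuousLinearMap.integral_apply hint,
    ProbabilityTheory.cond, integral_smul_measure, integral_congr_ae hdiff,
    setIntegral_lineDeriv_closedBall volume hf, sphereUniform, integral_smul_measure,
    Measure.toSphere_apply_univ, Measure.addHaar_closedBall_eq_addHaar_ball]
  simp only [real_inner_smul_right, mul_assoc, integral_const_mul]
  simp only [real_inner_comm e, mul_comm (F _), hfdef]
  simp [ENNReal.toReal_inv, ENNReal.toReal_mul]
  field_simp
end

section
/- There exists an absolute constant c > 0 such that for every dimension d, every δ > 0, every G ≥ 0, every G-Lipschitz function F : ℝ^d → ℝ, and every z ∈ ℝ^d, the two-point gradient estimator satisfies E_u[‖(d/(2δ)) · (F(z + δu) − F(z − δu)) · u − ∇F̃(z)‖²] ≤ c d G², where u is drawn uniformly at random from the Euclidean unit sphere S^{d−1} ⊂ ℝ^d and F̃ is the δ-smoothed version of F. -/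
/-!
Write `X = (d / (2δ)) f(u) u` with `f(u) = F(z + δu) - F(z - δu)`. Since
`‖X - ∇F̃(z)‖² ≤ 2‖X‖² + 2‖∇F̃(z)‖²` and `F̃` is `G`-Lipschitz (`smoothed_gradient_bound`), only
`E ‖X‖² = (d² / (4δ²)) E f(u)²` matters. The function `f` is odd and `2Gδ`-Lipschitz, so it suffices
that an odd `L`-Lipschitz function has second moment `O(L² / d)` on the sphere
(`sphere_second_moment`).

That estimate is transferred from Gaussian space. The extension `h(x) = ‖x‖ f(x / ‖x‖)` is odd,
`3L`-Lipschitz (`lipschitz_homogeneous_extension`) and 1-homogeneous, so polar coordinates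
(`stdGaussian_eq_withDensity`, `lintegral_polar`) and `E ‖g‖² = d` (`lintegral_norm_sq`) give
`E h(g)² = d · E f(u)²` for a standard Gaussian `g`. By oddness `E h(g)² ≤ E |h(g') - h(g)|²` with
`g'` an independent copy (`lintegral_odd_le`), and the right-hand side is at most
`(π / 2)² (3L)²` by the Maurey–Pisier rotation argument (`poincare`): along the arc
`g_θ = cos θ g + sin θ g'` one has `h(g') - h(g) = ∫_0^{π/2} Dh(g_θ) g_θ' dθ`, the pair
`(g_θ, g_θ')` has the law of `(g, g')`, and `E |ℓ(g')|² = ‖ℓ‖²` for a linear functional `ℓ`.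
-/

open MeasureTheory

open MeasureTheory ProbabilityTheory
open scoped ENNReal NNReal RealInnerProductSpace

/-! ### The standard Gaussian measure -/

/-- The standard Gaussian is absolutely continuous with a radial density. The density is
`c * exp (-r ^ 2 / 2)`; the two measures agree because their characteristic functions do. -/
lemma stdGaussian_eq_withDensity (E : Type*) [NormedAddCommGroup E] [InnerProductSpace ℝ E]
    [FiniteDimensional ℝ E] [MeasurableSpace E] [BorelSpace E] :
    ∃ w : ℝ → ℝ≥0∞, Measurable w ∧
      ProbabilityTheory.stdGaussian E = (volume : Measure E).withDensity (fun x => w ‖x‖) := by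
  set c : ℝ := (∫ x : E, Real.exp (-(1 / 2) * ‖x‖ ^ 2))⁻¹ with hc
  have hb : 0 < ((1 / 2 : ℂ)).re := by norm_num
  have hpos : 0 < ∫ x : E, Real.exp (-(1 / 2) * ‖x‖ ^ 2) := by
    rw [GaussianFourier.integral_rexp_neg_mul_sq_norm (by norm_num)]
    positivity
  have hc0 : 0 < c := inv_pos.mpr hpos
  -- A nonzero Bochner integral forces integrability.
  have hint : Integrable (fun x : E => Real.exp (-(1 / 2) * ‖x‖ ^ 2)) :=
    not_imp_comm.1 integral_undef hpos.ne'
  refine ⟨fun r => ENNReal.ofReal (c * Real.exp (-(1 / 2) * r ^ 2)), by fun_prop, ?_⟩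
  have : IsFiniteMeasure ((volume : Measure E).withDensity
      (fun x => ENNReal.ofReal (c * Real.exp (-(1 / 2) * ‖x‖ ^ 2)))) :=
    isFiniteMeasure_withDensity_ofReal (hint.const_mul c).2
  apply Measure.ext_of_charFun
  ext t
  rw [ProbabilityTheory.charFun_stdGaussian, charFun_apply,
    integral_withDensity_eq_integral_toReal_smul (by fun_prop) (by simp)]
  have h1 := GaussianFourier.integral_cexp_neg_mul_sq_norm_add (V := E) hb Complex.I t
  have h0 := GaussianFourier.integral_cexp_neg_mul_sq_norm (V := E) hb
  have h2 : (∫ v : E, Complex.exp (-(1 / 2) * ‖v‖ ^ 2)) = ((c⁻¹ : ℝ) : ℂ) := by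
    rw [hc, inv_inv, ← integral_complex_ofReal]
    congr 1
    ext v
    push_cast
    rfl
  rw [← h0, h2] at h1
  have h3 : ∀ x : E, (ENNReal.ofReal (c * Real.exp (-(1 / 2) * ‖x‖ ^ 2))).toReal •
      Complex.exp (⟪x, t⟫ * Complex.I) =
      (c : ℂ) * Complex.exp (-(1 / 2) * ‖x‖ ^ 2 + Complex.I * ⟪t, x⟫) := by
    intro x
    rw [ENNReal.toReal_ofReal (by positivity), Complex.real_smul, Complex.exp_add,
      real_inner_comm]
    push_cast
    ring_nf
  simp_rw [h3]
  rw [integral_const_mul, h1]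
  push_cast
  rw [← mul_assoc, mul_inv_cancel₀ (by exact_mod_cast hc0.ne'), one_mul, Complex.I_sq]
  congr 1
  ring

/-- Polar coordinates: for a nonnegative 2-homogeneous `H` and a radial weight `w`, the integral
splits into a spherical factor and a radial factor that does not depend on `H`. -/
lemma lintegral_polar {E : Type*} [NormedAddCommGroup E] [InnerProductSpace ℝ E]
    [FiniteDimensional ℝ E] [Nontrivial E] [MeasurableSpace E] [BorelSpace E]
    (w : ℝ → ℝ≥0∞) (hw : Measurable w)
    (H : E → ℝ≥0∞) (hH : Measurable H)
    (hom : ∀ r : ℝ, 0 < r → ∀ x, H (r • x) = ENNReal.ofReal (r ^ 2) * H x) :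
    ∫⁻ x, w ‖x‖ * H x = (∫⁻ u, H u ∂(volume : Measure E).toSphere) *
      ∫⁻ r : Set.Ioi (0 : ℝ), w r * ENNReal.ofReal (r.1 ^ 2)
        ∂(Measure.volumeIoiPow (Module.finrank ℝ E - 1)) := by
  have h1 : ∫⁻ x : E, w ‖x‖ * H x =
      ∫⁻ x : ({0}ᶜ : Set E), w ‖x.1‖ * H x ∂((volume : Measure E).comap (↑)) := by
    rw [lintegral_subtype_comap (measurableSet_singleton _).compl (fun x => w ‖x‖ * H x),
      restrict_compl_singleton]
  have h2 := (volume : Measure E).measurePreserving_homeomorphUnitSphereProd.lintegral_comp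
    (f := fun p => w p.2 * (ENNReal.ofReal (p.2.1 ^ 2) * H p.1)) (by fun_prop)
  have h3 : ∀ x : ({0}ᶜ : Set E), w ‖x.1‖ * H x = w (homeomorphUnitSphereProd E x).2 *
      (ENNReal.ofReal ((homeomorphUnitSphereProd E x).2.1 ^ 2) *
        H (homeomorphUnitSphereProd E x).1) := by
    intro x
    have hx : 0 < ‖x.1‖ := norm_pos_iff.mpr x.2
    simp only [homeomorphUnitSphereProd_apply_snd_coe, homeomorphUnitSphereProd_apply_fst_coe]
    rw [← hom _ hx, smul_smul, mul_inv_cancel₀ hx.ne', one_smul]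
  rw [h1]
  simp_rw [h3]
  rw [h2, ← lintegral_prod_mul (by fun_prop) (by fun_prop)]
  refine lintegral_congr fun p => ?_
  ring

lemma lintegral_inner_sq {E : Type*} [NormedAddCommGroup E] [InnerProductSpace ℝ E]
    [FiniteDimensional ℝ E] [MeasurableSpace E] [BorelSpace E] (L : E →L[ℝ] ℝ) :
    ∫⁻ y, ‖L y‖ₑ ^ 2 ∂(ProbabilityTheory.stdGaussian E) = ‖L‖ₑ ^ 2 := by
  have h := ProbabilityTheory.variance_dual_stdGaussian L
  have hm : MemLp L 2 (ProbabilityTheory.stdGaussian E) :=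
    ProbabilityTheory.IsGaussian.memLp_dual _ L 2 (by simp)
  have h2 := ProbabilityTheory.evariance_eq_lintegral_ofReal L
    (ProbabilityTheory.stdGaussian E)
  rw [← hm.ofReal_variance_eq, h, ProbabilityTheory.integral_strongDual_stdGaussian] at h2
  simp only [sub_zero] at h2
  rw [← ofReal_norm, ← ENNReal.ofReal_pow (norm_nonneg _), h2]
  refine lintegral_congr fun y => ?_
  rw [← ofReal_norm, ← ENNReal.ofReal_pow (norm_nonneg _), Real.norm_eq_abs, sq_abs]

lemma lintegral_norm_sq (d : ℕ) :
    ∫⁻ y, ‖y‖ₑ ^ 2 ∂(ProbabilityTheory.stdGaussian (EuclideanSpace ℝ (Fin d))) = d := by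
  have h : ∀ y : EuclideanSpace ℝ (Fin d), ‖y‖ₑ ^ 2 =
      ∑ i, ‖innerSL ℝ (EuclideanSpace.single i (1 : ℝ)) y‖ₑ ^ 2 := by
    intro y
    simp_rw [← ofReal_norm, ← ENNReal.ofReal_pow (norm_nonneg _)]
    rw [← ENNReal.ofReal_sum_of_nonneg (fun _ _ => by positivity), EuclideanSpace.norm_sq_eq]
    simp [EuclideanSpace.inner_single_left]
  simp_rw [h]
  rw [lintegral_finsetSum _ (fun i _ => by fun_prop)]
  simp_rw [lintegral_inner_sq]
  simp [← ofReal_norm, innerSL_apply_norm]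

/-! ### A Gaussian Poincaré inequality -/

/-- Cauchy–Schwarz against the constant function `1`. -/
lemma lintegral_sq_le {α : Type*} [MeasurableSpace α] (μ : Measure α) (f : α → ℝ≥0∞)
    (hf : AEMeasurable f μ) :
    (∫⁻ a, f a ∂μ) ^ 2 ≤ μ Set.univ * ∫⁻ a, f a ^ 2 ∂μ := by
  have h := ENNReal.lintegral_mul_le_Lp_mul_Lq μ Real.HolderConjugate.two_two
    (f := fun _ => 1) (g := f) aemeasurable_const hf
  simp only [Pi.mul_apply, one_mul, ENNReal.one_rpow, lintegral_const] at h
  calc (∫⁻ a, f a ∂μ) ^ 2 ≤ _ := pow_le_pow_left' h 2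
    _ = _ := by
      rw [mul_pow, ← ENNReal.rpow_natCast, ← ENNReal.rpow_natCast (n := 2), ← ENNReal.rpow_mul,
        ← ENNReal.rpow_mul]
      norm_num

/-- A Lipschitz function stays Lipschitz along the arc `θ ↦ cos θ • x + sin θ • y`; this makes the
fundamental theorem of calculus available along that arc. -/
lemma lipschitz_arc {E : Type*} [NormedAddCommGroup E] [NormedSpace ℝ E]
    {h : E → ℝ} {K : ℝ≥0} (hh : LipschitzWith K h) (x y : E) :
    LipschitzWith (K * (‖x‖₊ + ‖y‖₊)) (fun θ : ℝ => h (Real.cos θ • x + Real.sin θ • y)) := by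
  refine hh.comp (LipschitzWith.of_dist_le_mul fun a b => ?_)
  have h1 := Real.lipschitzWith_cos.dist_le_mul a b
  have h2 := Real.lipschitzWith_sin.dist_le_mul a b
  simp only [NNReal.coe_one, one_mul, Real.dist_eq] at h1 h2
  rw [dist_eq_norm, Real.dist_eq]
  calc _ = ‖(Real.cos a - Real.cos b) • x + (Real.sin a - Real.sin b) • y‖ := by
        congr 1; module
    _ ≤ |Real.cos a - Real.cos b| * ‖x‖ + |Real.sin a - Real.sin b| * ‖y‖ := by
        refine (norm_add_le _ _).trans ?_
        simp [norm_smul]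
    _ ≤ |a - b| * ‖x‖ + |a - b| * ‖y‖ := by gcongr
    _ = _ := by push_cast; ring

/-- Gaussian Poincaré inequality for Lipschitz functions (with a non-sharp constant), for two
independent standard Gaussian points, by the Maurey–Pisier rotation argument: integrate the
derivative of `h` along the arc from `p.1` to `p.2`, and use that the point of the arc and its
velocity are again independent standard Gaussians. -/
lemma poincare {E : Type*} [NormedAddCommGroup E] [InnerProductSpace ℝ E]
    [FiniteDimensional ℝ E] [MeasurableSpace E] [BorelSpace E]
    {h : E → ℝ} {K : ℝ≥0} (hh : LipschitzWith K h)
    (hac : stdGaussian E ≪ volume) :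
    ∫⁻ p, ‖h p.2 - h p.1‖ₑ ^ 2 ∂((stdGaussian E).prod
      (stdGaussian E)) ≤ ENNReal.ofReal (Real.pi / 2) ^ 2 * K ^ 2 := by
  set γ := stdGaussian E
  set τ : Measure ℝ := volume.restrict (Set.Ioc 0 (Real.pi / 2)) with hτ
  have hτu : τ Set.univ = ENNReal.ofReal (Real.pi / 2) := by simp [hτ]
  have hrot : ∀ θ, MeasurePreserving (ContinuousLinearMap.rotation (E := E) θ) (γ.prod γ)
      (γ.prod γ) := fun θ =>
    ⟨(ContinuousLinearMap.rotation θ).continuous.measurable,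
      IsGaussian.map_rotation_eq_self (by simp [γ]) θ⟩
  have hcont : Continuous fun q : (E × E) × ℝ => ContinuousLinearMap.rotation q.2 q.1 := by
    simp only [ContinuousLinearMap.rotation_apply]
    fun_prop
  have hD : MeasurableSet {x | DifferentiableAt ℝ h x} := measurableSet_of_differentiableAt ℝ h
  -- Rademacher at each fixed `θ` transfers to almost every `θ` on almost every arc by Fubini.
  have hdiff : ∀ᵐ p ∂(γ.prod γ), ∀ᵐ θ ∂τ,
      DifferentiableAt ℝ h (ContinuousLinearMap.rotation θ p).1 := by
    rw [Measure.ae_ae_comm]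
    · refine Filter.Eventually.of_forall fun θ => ?_
      have h1 : ∀ᵐ x ∂γ, DifferentiableAt ℝ h x := hac hh.ae_differentiableAt
      have h2 : ∀ᵐ p ∂(γ.prod γ), DifferentiableAt ℝ h p.1 :=
        Measure.quasiMeasurePreserving_fst.ae h1
      exact (hrot θ).quasiMeasurePreserving.ae h2
    · exact (measurable_fst.comp hcont.measurable) hD
  set G : E × E → ℝ≥0∞ := fun p => ‖fderiv ℝ h p.1 p.2‖ₑ ^ 2 with hG
  have hGm : Measurable G := by
    have h1 : Measurable fun p : E × E => (fderiv ℝ h p.1, p.2) :=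
      ((measurable_fderiv ℝ h).comp measurable_fst).prodMk measurable_snd
    exact ((ContinuousLinearMap.measurable_apply₂.comp h1).enorm).pow_const 2
  have hpt : ∀ᵐ p ∂(γ.prod γ), ‖h p.2 - h p.1‖ₑ ^ 2 ≤
      ENNReal.ofReal (Real.pi / 2) * ∫⁻ θ, G (ContinuousLinearMap.rotation θ p) ∂τ := by
    filter_upwards [hdiff] with p hp
    have hft := ((lipschitz_arc hh p.1 p.2).lipschitzOnWith
      (s := Set.uIcc 0 (Real.pi / 2))).absolutelyContinuousOnInterval.integral_deriv_eq_sub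
    simp only [Real.cos_pi_div_two, Real.sin_pi_div_two, Real.cos_zero, Real.sin_zero, zero_smul,
      one_smul, zero_add, add_zero] at hft
    rw [intervalIntegral.integral_of_le (by positivity)] at hft
    rw [← hft]
    calc _ ≤ (∫⁻ θ, ‖deriv (fun θ : ℝ => h (Real.cos θ • p.1 + Real.sin θ • p.2)) θ‖ₑ ∂τ) ^ 2 :=
          pow_le_pow_left' (enorm_integral_le_lintegral_enorm _) 2
      _ ≤ _ := lintegral_sq_le _ _ (measurable_deriv _).enorm.aemeasurable
      _ = _ := by
        rw [hτu]
        congr 1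
        refine lintegral_congr_ae ?_
        filter_upwards [hp] with θ hθ
        have h1 : HasDerivAt (fun θ : ℝ => Real.cos θ • p.1 + Real.sin θ • p.2)
            (-Real.sin θ • p.1 + Real.cos θ • p.2) θ :=
          ((Real.hasDerivAt_cos θ).smul_const _).add ((Real.hasDerivAt_sin θ).smul_const _)
        have h2 := HasFDerivAt.comp_hasDerivAt θ hθ.hasFDerivAt h1
        simp only [hG]
        exact congrArg (fun t : ℝ => ‖t‖ₑ ^ 2) h2.deriv
  calc _ ≤ ∫⁻ p, ENNReal.ofReal (Real.pi / 2) * ∫⁻ θ, G (ContinuousLinearMap.rotation θ p) ∂τ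
        ∂(γ.prod γ) := lintegral_mono_ae hpt
    _ = ENNReal.ofReal (Real.pi / 2) * ∫⁻ p, ∫⁻ θ, G (ContinuousLinearMap.rotation θ p) ∂τ
        ∂(γ.prod γ) := lintegral_const_mul' _ _ ENNReal.ofReal_ne_top
    _ = ENNReal.ofReal (Real.pi / 2) * ∫⁻ θ, ∫⁻ p, G (ContinuousLinearMap.rotation θ p)
        ∂(γ.prod γ) ∂τ := by
        rw [lintegral_lintegral_swap]
        exact (hGm.comp hcont.measurable).aemeasurable
    _ = ENNReal.ofReal (Real.pi / 2) ^ 2 * ∫⁻ p, G p ∂(γ.prod γ) := by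
        simp_rw [fun θ => (hrot θ).lintegral_comp hGm]
        rw [lintegral_const, hτu]
        ring
    _ ≤ _ := by
        gcongr
        rw [lintegral_prod _ hGm.aemeasurable]
        simp only [hG, lintegral_inner_sq, γ]
        calc _ ≤ ∫⁻ x, (K : ℝ≥0∞) ^ 2 ∂γ := by
              refine lintegral_mono fun x => ?_
              refine pow_le_pow_left' ?_ 2
              rw [enorm_le_coe]
              exact norm_fderiv_le_of_lipschitz ℝ hh
          _ = _ := by simp

/-! ### Homogeneous extension, odd functions and smoothing -/

/-- The 1-homogeneous extension of `f` from the unit sphere to the whole space is Lipschitz. -/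
lemma lipschitz_homogeneous_extension {E : Type*} [NormedAddCommGroup E] [NormedSpace ℝ E]
    {f : E → ℝ} {L : ℝ≥0} (hf : LipschitzWith L f) (hf0 : f 0 = 0) :
    LipschitzWith (3 * L) (fun x => ‖x‖ * f (‖x‖⁻¹ • x)) := by
  refine LipschitzWith.of_dist_le_mul fun x y => ?_
  have hbd : |f (‖x‖⁻¹ • x)| ≤ L := by
    have h1 := hf.dist_le_mul (‖x‖⁻¹ • x) 0
    rw [hf0, dist_zero_right, dist_zero_right, Real.norm_eq_abs] at h1
    refine h1.trans (mul_le_of_le_one_right L.2 ?_)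
    rw [norm_smul, norm_inv, norm_norm]
    exact inv_mul_le_one
  -- At `x = 0` or `y = 0` the normalisation `‖x‖⁻¹ • x` is `0`, so these cases are separate.
  have hdir : ‖y‖ * ‖‖x‖⁻¹ • x - ‖y‖⁻¹ • y‖ ≤ 2 * ‖x - y‖ := by
    rcases eq_or_ne y 0 with rfl | hy
    · simp
    rcases eq_or_ne x 0 with rfl | hx
    · have : ‖y‖ ≠ 0 := norm_ne_zero_iff.mpr hy
      simp [norm_smul, this]
      linarith [norm_nonneg y]
    have hx' : ‖x‖ ≠ 0 := norm_ne_zero_iff.mpr hx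
    have hy' : ‖y‖ ≠ 0 := norm_ne_zero_iff.mpr hy
    calc ‖y‖ * ‖‖x‖⁻¹ • x - ‖y‖⁻¹ • y‖ = ‖‖y‖ • (‖x‖⁻¹ • x - ‖y‖⁻¹ • y)‖ := by
          rw [norm_smul, norm_norm]
      _ = ‖(x - y) + ((‖y‖ - ‖x‖) * ‖x‖⁻¹) • x‖ := by
          congr 1
          rw [smul_sub, smul_smul, smul_smul, mul_inv_cancel₀ hy', sub_mul, mul_inv_cancel₀ hx']
          module
      _ ≤ ‖x - y‖ + ‖((‖y‖ - ‖x‖) * ‖x‖⁻¹) • x‖ := norm_add_le _ _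
      _ = ‖x - y‖ + |‖y‖ - ‖x‖| := by
          rw [norm_smul, norm_mul, norm_inv, norm_norm, mul_assoc, inv_mul_cancel₀ hx', mul_one,
            Real.norm_eq_abs]
      _ ≤ 2 * ‖x - y‖ := by
          have := abs_norm_sub_norm_le y x
          rw [norm_sub_rev y x] at this
          linarith
  have hfd := hf.dist_le_mul (‖x‖⁻¹ • x) (‖y‖⁻¹ • y)
  rw [Real.dist_eq, dist_eq_norm] at hfd
  rw [Real.dist_eq, dist_eq_norm]
  calc |‖x‖ * f (‖x‖⁻¹ • x) - ‖y‖ * f (‖y‖⁻¹ • y)|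
      = |(‖x‖ - ‖y‖) * f (‖x‖⁻¹ • x) + ‖y‖ * (f (‖x‖⁻¹ • x) - f (‖y‖⁻¹ • y))| := by
        congr 1; ring
    _ ≤ |‖x‖ - ‖y‖| * |f (‖x‖⁻¹ • x)| + ‖y‖ * |f (‖x‖⁻¹ • x) - f (‖y‖⁻¹ • y)| := by
        refine (abs_add_le _ _).trans_eq ?_
        rw [abs_mul, abs_mul, abs_norm]
    _ ≤ ‖x - y‖ * L + ‖y‖ * (L * ‖‖x‖⁻¹ • x - ‖y‖⁻¹ • y‖) := by
        gcongr
        exact abs_norm_sub_norm_le x y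
    _ = ‖x - y‖ * L + L * (‖y‖ * ‖‖x‖⁻¹ • x - ‖y‖⁻¹ • y‖) := by ring
    _ ≤ ‖x - y‖ * L + L * (2 * ‖x - y‖) := by gcongr
    _ = _ := by push_cast; ring

/-- For an odd `h` and a symmetric measure, replacing `p.1` by `-p.1` and averaging bounds the second
moment of `h` by the mean squared difference at two independent points. -/
lemma lintegral_odd_le {E : Type*} [AddGroup E] [MeasurableSpace E] [MeasurableNeg E]
    (γ : Measure E) [IsProbabilityMeasure γ] (hneg : MeasurePreserving (fun x : E => -x) γ γ)
    {h : E → ℝ} (hm : Measurable h) (hodd : ∀ x, h (-x) = - h x) :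
    ∫⁻ x, ‖h x‖ₑ ^ 2 ∂γ ≤ ∫⁻ p, ‖h p.2 - h p.1‖ₑ ^ 2 ∂(γ.prod γ) := by
  have hS : MeasurePreserving (fun p : E × E => (-p.1, p.2)) (γ.prod γ) (γ.prod γ) :=
    hneg.prod (MeasurePreserving.id γ)
  have h1 := hS.lintegral_comp (f := fun p => ‖h p.2 - h p.1‖ₑ ^ 2) (by fun_prop)
  have h2 : ∫⁻ x, ‖h x‖ₑ ^ 2 ∂γ = ∫⁻ p, ‖h p.2‖ₑ ^ 2 ∂(γ.prod γ) := by
    rw [lintegral_prod _ (by fun_prop)]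
    simp
  have hpt : ∀ p : E × E, 2 * ‖h p.2‖ₑ ^ 2 ≤
      ‖h p.2 - h p.1‖ₑ ^ 2 + ‖h p.2 - h (-p.1)‖ₑ ^ 2 := by
    intro p
    rw [hodd]
    simp_rw [← ofReal_norm, ← ENNReal.ofReal_pow (norm_nonneg _), Real.norm_eq_abs, sq_abs]
    rw [← ENNReal.ofReal_add (by positivity) (by positivity),
      show (2 : ℝ≥0∞) = ENNReal.ofReal 2 by simp, ← ENNReal.ofReal_mul (by norm_num)]
    exact ENNReal.ofReal_le_ofReal (by nlinarith [sq_nonneg (h p.1)])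
  have h3 := lintegral_mono (μ := γ.prod γ) hpt
  rw [lintegral_const_mul _ (by fun_prop), lintegral_add_left (by fun_prop), h1, ← two_mul,
    ← h2] at h3
  exact (ENNReal.mul_le_mul_iff_right (by simp) (by simp)).1 h3

/-- Averaging over translates preserves the Lipschitz constant, which bounds the gradient. -/
lemma smoothed_gradient_bound {E : Type*} [NormedAddCommGroup E] [InnerProductSpace ℝ E]
    [FiniteDimensional ℝ E] [MeasurableSpace E] [BorelSpace E] {F : E → ℝ} {K : ℝ≥0}
    (hF : LipschitzWith K F) (δ : ℝ) (z : E) :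
    ‖gradient (fun x => ∫ v, F (x + δ • v) ∂(ProbabilityTheory.cond volume
      (Metric.closedBall (0 : E) 1))) z‖ ≤ K := by
  set B := Metric.closedBall (0 : E) 1
  have : IsProbabilityMeasure (ProbabilityTheory.cond volume B) := by
    apply cond_isProbabilityMeasure_of_finite
    · exact (Metric.measure_closedBall_pos volume 0 one_pos).ne'
    · exact (isCompact_closedBall 0 1).measure_ne_top
  have hFc := hF.continuous
  have hint : ∀ x : E, Integrable (fun v => F (x + δ • v)) (ProbabilityTheory.cond volume B) := by
    intro x
    have h1 : IntegrableOn (fun v => F (x + δ • v)) B volume :=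
      ContinuousOn.integrableOn_compact (isCompact_closedBall 0 1) (by fun_prop)
    refine Integrable.smul_measure h1 (ENNReal.inv_ne_top.mpr ?_)
    exact (Metric.measure_closedBall_pos volume 0 one_pos).ne'
  rw [gradient, LinearIsometryEquiv.norm_map]
  refine norm_fderiv_le_of_lipschitz ℝ (LipschitzWith.of_dist_le_mul fun x y => ?_)
  rw [dist_eq_norm, ← integral_sub (hint x) (hint y)]
  refine (norm_integral_le_of_norm_le_const (C := K * dist x y)
    (Filter.Eventually.of_forall fun v => ?_)).trans (by simp)
  rw [← dist_eq_norm]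
  refine (hF.dist_le_mul _ _).trans ?_
  simp

/-! ### Second moments on the sphere and the estimator -/

/-- Spherical concentration: an odd `L`-Lipschitz function has second moment `O(L ^ 2 / d)` on
`S^{d-1}`. With `h` the 1-homogeneous extension of `f`, polar coordinates give
`E h(g) ^ 2 = E ‖g‖ ^ 2 * E f(u) ^ 2 = d * E f(u) ^ 2` for a standard Gaussian `g`. -/
lemma sphere_second_moment {d : ℕ} (hd : 0 < d) {f : EuclideanSpace ℝ (Fin d) → ℝ} {L : ℝ≥0}
    (hf : LipschitzWith L f) (hodd : ∀ x, f (-x) = - f x) :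
    d * ∫⁻ u, ‖f u‖ₑ ^ 2 ∂(sphereUniform d) ≤
      ENNReal.ofReal (Real.pi / 2) ^ 2 * ((3 * L : ℝ≥0) : ℝ≥0∞) ^ 2 := by
  have hne : Nonempty (Fin d) := ⟨⟨0, hd⟩⟩
  have hf0 : f 0 = 0 := by
    have := hodd 0
    rw [neg_zero] at this
    linarith
  have hfc := hf.continuous
  have hL := lipschitz_homogeneous_extension hf hf0
  set h : EuclideanSpace ℝ (Fin d) → ℝ := fun x => ‖x‖ * f (‖x‖⁻¹ • x) with hh
  have hhodd : ∀ x, h (-x) = - h x := by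
    intro x
    simp [hh, hodd]
  obtain ⟨w, hw, hγ⟩ := stdGaussian_eq_withDensity (EuclideanSpace ℝ (Fin d))
  have hac : stdGaussian (EuclideanSpace ℝ (Fin d)) ≪ volume := by
    rw [hγ]
    exact withDensity_absolutelyContinuous _ _
  have hneg : MeasurePreserving (fun x : EuclideanSpace ℝ (Fin d) => -x)
      (stdGaussian (EuclideanSpace ℝ (Fin d))) (stdGaussian (EuclideanSpace ℝ (Fin d))) :=
    ⟨measurable_neg, stdGaussian_map (LinearIsometryEquiv.neg ℝ)⟩
  have hmain := (lintegral_odd_le _ hneg hL.continuous.measurable hhodd).trans (poincare hL hac)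
  -- Applied below both to `h` and to the norm, so that the radial factor cancels.
  have hpol : ∀ H : EuclideanSpace ℝ (Fin d) → ℝ, Continuous H →
      (∀ r : ℝ, 0 < r → ∀ x, H (r • x) = r * H x) →
      ∫⁻ x, ‖H x‖ₑ ^ 2 ∂(stdGaussian (EuclideanSpace ℝ (Fin d))) =
        (∫⁻ u, ‖H u‖ₑ ^ 2 ∂(volume : Measure (EuclideanSpace ℝ (Fin d))).toSphere) *
        ∫⁻ r : Set.Ioi (0 : ℝ), w r * ENNReal.ofReal (r.1 ^ 2)
        ∂(Measure.volumeIoiPow (Module.finrank ℝ (EuclideanSpace ℝ (Fin d)) - 1)) := by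
    intro H hH hom
    rw [hγ, lintegral_withDensity_eq_lintegral_mul _ (by fun_prop) (by fun_prop)]
    refine lintegral_polar w hw (fun x => ‖H x‖ₑ ^ 2) (by fun_prop) fun r hr x => ?_
    rw [hom r hr, enorm_mul, mul_pow, ← ofReal_norm r, ← ENNReal.ofReal_pow (norm_nonneg _),
      Real.norm_eq_abs, sq_abs]
  have h1 := hpol h hL.continuous (by
    intro r hr x
    simp only [hh, norm_smul, Real.norm_eq_abs, abs_of_pos hr, mul_inv, smul_smul]
    rw [show r⁻¹ * ‖x‖⁻¹ * r = ‖x‖⁻¹ by field_simp]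
    ring)
  have h2 := hpol (fun x => ‖x‖) continuous_norm (by
    intro r hr x
    simp only [norm_smul, Real.norm_eq_abs, abs_of_pos hr])
  simp only [enorm_norm] at h2
  rw [lintegral_norm_sq] at h2
  have hu : ∀ u : Metric.sphere (0 : EuclideanSpace ℝ (Fin d)) 1,
      ‖(u : EuclideanSpace ℝ (Fin d))‖ = 1 := fun u => by simp
  have hu' : ∀ u : Metric.sphere (0 : EuclideanSpace ℝ (Fin d)) 1,
      ‖(u : EuclideanSpace ℝ (Fin d))‖ₑ = 1 := fun u => by simp [← ofReal_norm]
  have hu2 : ∀ u : Metric.sphere (0 : EuclideanSpace ℝ (Fin d)) 1,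
      h (u : EuclideanSpace ℝ (Fin d)) = f u := fun u => by simp [hh]
  simp only [hu', one_pow, lintegral_one] at h2
  simp only [hu2] at h1
  refine le_trans (le_of_eq ?_) hmain
  have hS0 : (volume : Measure (EuclideanSpace ℝ (Fin d))).toSphere Set.univ ≠ 0 :=
    Measure.measure_univ_ne_zero.mpr (Measure.toSphere_ne_zero _)
  have hSt : (volume : Measure (EuclideanSpace ℝ (Fin d))).toSphere Set.univ ≠ ∞ :=
    measure_ne_top _ _
  rw [h1, h2, sphereUniform, lintegral_smul_measure, smul_eq_mul]
  rw [mul_right_comm, ← mul_assoc, ENNReal.mul_inv_cancel hS0 hSt, one_mul]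

theorem two_point_estimator_variance :
    ∃ c : ℝ, 0 < c ∧
      ∀ (d : ℕ) (δ G : ℝ), 0 < δ → 0 ≤ G →
        ∀ F : EuclideanSpace ℝ (Fin d) → ℝ,
          (∀ x y : EuclideanSpace ℝ (Fin d), |F x - F y| ≤ G * ‖x - y‖) →
          ∀ z : EuclideanSpace ℝ (Fin d),
            (∫ u : Metric.sphere (0 : EuclideanSpace ℝ (Fin d)) 1,
                ‖((d : ℝ) / (2 * δ) *
                    (F (z + δ • (u : EuclideanSpace ℝ (Fin d))) -
                      F (z - δ • (u : EuclideanSpace ℝ (Fin d))))) •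
                    (u : EuclideanSpace ℝ (Fin d)) -
                  gradient (smoothed δ F) z‖ ^ 2 ∂(sphereUniform d))
              ≤ c * d * G ^ 2 := by
  refine ⟨9 / 2 * Real.pi ^ 2 + 2, by positivity, fun d δ G hδ hG F hF z => ?_⟩
  -- In dimension zero the sphere is empty and `sphereUniform 0` is the zero measure.
  rcases Nat.eq_zero_or_pos d with rfl | hd
  · have : IsEmpty (Metric.sphere (0 : EuclideanSpace ℝ (Fin 0)) 1) :=
      ⟨fun u => by
        have h1 := u.2
        rw [Subsingleton.elim u.1 0] at h1
        simp at h1⟩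
    simp [Measure.eq_zero_of_isEmpty]
  have hne : Nonempty (Fin d) := ⟨⟨0, hd⟩⟩
  have hd1 : (1 : ℝ) ≤ d := by exact_mod_cast hd
  have hFL : LipschitzWith ⟨G, hG⟩ F := LipschitzWith.of_dist_le_mul fun x y => by
    rw [Real.dist_eq, dist_eq_norm]
    exact hF x y
  have hgrad : ‖gradient (smoothed δ F) z‖ ≤ G := smoothed_gradient_bound hFL δ z
  have hFc := hFL.continuous
  set f : EuclideanSpace ℝ (Fin d) → ℝ := fun u => F (z + δ • u) - F (z - δ • u) with hf
  have hfL : LipschitzWith ⟨2 * G * δ, by positivity⟩ f :=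
    LipschitzWith.of_dist_le_mul fun x y => by
      have h1 := hF (z + δ • x) (z + δ • y)
      have h2 := hF (z - δ • y) (z - δ • x)
      rw [show z + δ • x - (z + δ • y) = δ • (x - y) by module, norm_smul, Real.norm_eq_abs,
        abs_of_pos hδ] at h1
      rw [show z - δ • y - (z - δ • x) = δ • (x - y) by module, norm_smul, Real.norm_eq_abs,
        abs_of_pos hδ] at h2
      rw [Real.dist_eq, dist_eq_norm]
      simp only [hf]
      rw [show F (z + δ • x) - F (z - δ • x) - (F (z + δ • y) - F (z - δ • y)) =
        (F (z + δ • x) - F (z + δ • y)) + (F (z - δ • y) - F (z - δ • x)) by ring]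
      refine (abs_add_le _ _).trans ((add_le_add h1 h2).trans_eq ?_)
      change _ = 2 * G * δ * ‖x - y‖
      ring
  have hfo : ∀ x, f (-x) = - f x := fun x => by simp [hf, sub_eq_add_neg, add_comm]
  have hS0 : (volume : Measure (EuclideanSpace ℝ (Fin d))).toSphere Set.univ ≠ 0 :=
    Measure.measure_univ_ne_zero.mpr (Measure.toSphere_ne_zero _)
  have hprob : IsProbabilityMeasure (sphereUniform d) :=
    ⟨by
      rw [sphereUniform, Measure.smul_apply, smul_eq_mul,
        ENNReal.inv_mul_cancel hS0 (measure_ne_top _ _)]⟩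
  have hfc := hfL.continuous
  have hint : Integrable (fun u : Metric.sphere (0 : EuclideanSpace ℝ (Fin d)) 1 =>
      f (u : EuclideanSpace ℝ (Fin d)) ^ 2) (sphereUniform d) := by
    have h1 : Continuous (fun u : Metric.sphere (0 : EuclideanSpace ℝ (Fin d)) 1 =>
      f (u : EuclideanSpace ℝ (Fin d)) ^ 2) := by fun_prop
    exact h1.integrable_of_hasCompactSupport (HasCompactSupport.of_compactSpace _)
  have hmom : d * ∫ u : Metric.sphere (0 : EuclideanSpace ℝ (Fin d)) 1,
      f (u : EuclideanSpace ℝ (Fin d)) ^ 2 ∂(sphereUniform d) ≤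
      (Real.pi / 2) ^ 2 * (3 * (2 * G * δ)) ^ 2 := by
    have h1 := sphere_second_moment hd hfL hfo
    have h2 : ∫⁻ u : Metric.sphere (0 : EuclideanSpace ℝ (Fin d)) 1,
        ‖f (u : EuclideanSpace ℝ (Fin d))‖ₑ ^ 2 ∂(sphereUniform d) =
        ENNReal.ofReal (∫ u : Metric.sphere (0 : EuclideanSpace ℝ (Fin d)) 1,
      f (u : EuclideanSpace ℝ (Fin d)) ^ 2 ∂(sphereUniform d)) := by
      rw [ofReal_integral_eq_lintegral_ofReal hint (Filter.Eventually.of_forall fun u => sq_nonneg _)]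
      refine lintegral_congr fun u => ?_
      rw [← ofReal_norm, ← ENNReal.ofReal_pow (norm_nonneg _), Real.norm_eq_abs, sq_abs]
    rw [h2, ← ENNReal.ofReal_natCast, ← ENNReal.ofReal_mul (by positivity),
      ← ENNReal.ofReal_coe_nnreal, ← ENNReal.ofReal_pow (by positivity),
      ← ENNReal.ofReal_pow (by positivity), ← ENNReal.ofReal_mul (by positivity)] at h1
    exact (ENNReal.ofReal_le_ofReal_iff (by positivity)).1 h1
  have hpt : ∀ u : Metric.sphere (0 : EuclideanSpace ℝ (Fin d)) 1,
      ‖((d : ℝ) / (2 * δ) * f (u : EuclideanSpace ℝ (Fin d))) •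
        (u : EuclideanSpace ℝ (Fin d)) - gradient (smoothed δ F) z‖ ^ 2 ≤
      (d : ℝ) ^ 2 / (2 * δ ^ 2) * f (u : EuclideanSpace ℝ (Fin d)) ^ 2 + 2 * G ^ 2 := by
    intro u
    have h1 := norm_sub_le (((d : ℝ) / (2 * δ) * f (u : EuclideanSpace ℝ (Fin d))) •
        (u : EuclideanSpace ℝ (Fin d))) (gradient (smoothed δ F) z)
    have h2 : ‖((d : ℝ) / (2 * δ) * f (u : EuclideanSpace ℝ (Fin d))) •
        (u : EuclideanSpace ℝ (Fin d))‖ = |(d : ℝ) / (2 * δ) * f (u : EuclideanSpace ℝ (Fin d))| := by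
      rw [norm_smul, Real.norm_eq_abs, norm_eq_of_mem_sphere, mul_one]
    rw [h2] at h1
    have h3 := pow_le_pow_left₀ (norm_nonneg _) (h1.trans (add_le_add_right hgrad _)) 2
    refine h3.trans ((add_sq_le (a := _) (b := _)).trans_eq ?_)
    rw [sq_abs]
    field_simp
  calc _ ≤ ∫ u : Metric.sphere (0 : EuclideanSpace ℝ (Fin d)) 1,
        ((d : ℝ) ^ 2 / (2 * δ ^ 2) * f (u : EuclideanSpace ℝ (Fin d)) ^ 2 + 2 * G ^ 2)
        ∂(sphereUniform d) :=
        integral_mono_of_nonneg (Filter.Eventually.of_forall fun u => sq_nonneg _)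
          ((hint.const_mul _).add (integrable_const _)) (Filter.Eventually.of_forall hpt)
    _ = d / (2 * δ ^ 2) * (d * ∫ u : Metric.sphere (0 : EuclideanSpace ℝ (Fin d)) 1,
      f (u : EuclideanSpace ℝ (Fin d)) ^ 2 ∂(sphereUniform d)) + 2 * G ^ 2 := by
        rw [integral_add (hint.const_mul _) (integrable_const _), integral_const_mul]
        simp
        ring
    _ ≤ d / (2 * δ ^ 2) * ((Real.pi / 2) ^ 2 * (3 * (2 * G * δ)) ^ 2) + 2 * (d * G ^ 2) := by
        gcongr
        exact le_mul_of_one_le_left (sq_nonneg G) hd1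
    _ = _ := by
        field_simp
        ring
end

section
/- Let f be a set function on a ground set of size d with |f(S)| ≤ M for every subset S, and let F be its multilinear extension. Then F is 2M√d-Lipschitz with respect to the Euclidean norm on [0,1]^d: |F(x) − F(y)| ≤ 2M√d · ‖x − y‖ for all x, y ∈ [0,1]^d. -/
/-!
For `x ∈ [0,1]^d` the weights `(∏ i ∈ S, x i) * ∏ j ∈ Sᶜ, (1 - x j)` are the law of a random set
containing each `i` independently with probability `x i`. Hence `|F x - F y| ≤ M * V`, where `V` is
the `ℓ¹` distance between two product measures. Such a distance is at most the sum of the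
`ℓ¹` distances of the factors (`sum_abs_weight_sub_le`, by adding one factor at a time), and each
Bernoulli factor contributes `2 * |x i - y i|`. Cauchy–Schwarz bounds `∑ i, |x i - y i|` by
`√d * ‖x - y‖`.
-/

/-- The multilinear extension of a set function `f : 2^[d] → ℝ`:
`F(x) = Σ_{S ⊆ [d]} f(S) ∏_{i ∈ S} x_i ∏_{j ∉ S} (1 - x_j)`. -/
noncomputable def multilinearExt (d : ℕ) (f : Finset (Fin d) → ℝ)
    (x : EuclideanSpace ℝ (Fin d)) : ℝ :=
  ∑ S : Finset (Fin d), f S * ((∏ i ∈ S, x i) * ∏ j ∈ Sᶜ, (1 - x j))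

/-- The `ℓ¹` distance between two products of Bernoulli laws is at most the sum of the `ℓ¹`
distances of their factors. -/
lemma sum_abs_weight_sub_le {ι : Type*} [DecidableEq ι] (x y : ι → ℝ) (s : Finset ι)
    (hx : ∀ i, x i ∈ Set.Icc (0 : ℝ) 1) (hy : ∀ i, y i ∈ Set.Icc (0 : ℝ) 1) :
    ∑ T ∈ s.powerset, |(∏ i ∈ T, x i) * ∏ j ∈ s \ T, (1 - x j) -
      (∏ i ∈ T, y i) * ∏ j ∈ s \ T, (1 - y j)| ≤ 2 * ∑ i ∈ s, |x i - y i| := by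
  induction s using Finset.induction_on with
  | empty => simp
  | insert a s ha ih =>
    rw [Finset.sum_powerset_insert ha, Finset.sum_insert ha, ← Finset.sum_add_distrib]
    have total : ∑ T ∈ s.powerset, (∏ i ∈ T, y i) * ∏ j ∈ s \ T, (1 - y j) = 1 := by
      rw [← Finset.prod_add]
      simp
    have key : ∀ T ∈ s.powerset,
        |(∏ i ∈ T, x i) * ∏ j ∈ insert a s \ T, (1 - x j) -
          (∏ i ∈ T, y i) * ∏ j ∈ insert a s \ T, (1 - y j)| +
        |(∏ i ∈ insert a T, x i) * ∏ j ∈ insert a s \ insert a T, (1 - x j) -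
          (∏ i ∈ insert a T, y i) * ∏ j ∈ insert a s \ insert a T, (1 - y j)| ≤
        |(∏ i ∈ T, x i) * ∏ j ∈ s \ T, (1 - x j) -
          (∏ i ∈ T, y i) * ∏ j ∈ s \ T, (1 - y j)| +
        2 * |x a - y a| * ((∏ i ∈ T, y i) * ∏ j ∈ s \ T, (1 - y j)) := by
      intro T hT
      have haT : a ∉ T := fun h => ha (Finset.mem_powerset.mp hT h)
      have h2 : insert a s \ insert a T = s \ T := by
        ext i
        simp only [Finset.mem_sdiff, Finset.mem_insert]
        grind
      have h3 : a ∉ s \ T := by simp [ha]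
      rw [h2, Finset.insert_sdiff_of_notMem _ haT, Finset.prod_insert h3, Finset.prod_insert h3,
        Finset.prod_insert haT, Finset.prod_insert haT]
      have hQ : 0 ≤ (∏ i ∈ T, y i) * ∏ j ∈ s \ T, (1 - y j) :=
        mul_nonneg (Finset.prod_nonneg fun i _ => (hy i).1)
          (Finset.prod_nonneg fun i _ => sub_nonneg.mpr (hy i).2)
      have e1 : (∏ i ∈ T, x i) * ((1 - x a) * ∏ j ∈ s \ T, (1 - x j)) -
          (∏ i ∈ T, y i) * ((1 - y a) * ∏ j ∈ s \ T, (1 - y j)) =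
          (1 - x a) * ((∏ i ∈ T, x i) * ∏ j ∈ s \ T, (1 - x j) -
            (∏ i ∈ T, y i) * ∏ j ∈ s \ T, (1 - y j)) -
          (x a - y a) * ((∏ i ∈ T, y i) * ∏ j ∈ s \ T, (1 - y j)) := by ring
      have e2 : (x a * ∏ i ∈ T, x i) * ∏ j ∈ s \ T, (1 - x j) -
          (y a * ∏ i ∈ T, y i) * ∏ j ∈ s \ T, (1 - y j) =
          x a * ((∏ i ∈ T, x i) * ∏ j ∈ s \ T, (1 - x j) -
            (∏ i ∈ T, y i) * ∏ j ∈ s \ T, (1 - y j)) +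
          (x a - y a) * ((∏ i ∈ T, y i) * ∏ j ∈ s \ T, (1 - y j)) := by ring
      rw [e1, e2]
      refine (add_le_add (abs_sub _ _) (abs_add_le _ _)).trans (le_of_eq ?_)
      simp only [abs_mul (1 - x a), abs_mul (x a), abs_mul (x a - y a), abs_of_nonneg hQ,
        abs_of_nonneg (hx a).1, abs_of_nonneg (sub_nonneg.mpr (hx a).2)]
      ring
    refine (Finset.sum_le_sum key).trans ?_
    rw [Finset.sum_add_distrib, ← Finset.mul_sum, total]
    linarith

theorem multilinearExt_lipschitz (d : ℕ) (M : ℝ) (f : Finset (Fin d) → ℝ)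
    (hf : ∀ S : Finset (Fin d), |f S| ≤ M) :
    ∀ x y : EuclideanSpace ℝ (Fin d),
      (∀ i, x i ∈ Set.Icc (0 : ℝ) 1) → (∀ i, y i ∈ Set.Icc (0 : ℝ) 1) →
      |multilinearExt d f x - multilinearExt d f y| ≤ 2 * M * Real.sqrt d * ‖x - y‖ := by
  intro x y hx hy
  have hM : 0 ≤ M := (abs_nonneg _).trans (hf ∅)
  have hV := sum_abs_weight_sub_le (fun i => x i) (fun i => y i) Finset.univ hx hy
  simp only [Finset.powerset_univ, ← Finset.compl_eq_univ_sdiff] at hV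
  have hCS : ∑ i, |x i - y i| ≤ Real.sqrt d * ‖x - y‖ := by
    rw [EuclideanSpace.norm_eq, ← Real.sqrt_mul (Nat.cast_nonneg d)]
    apply Real.le_sqrt_of_sq_le
    simpa using sq_sum_le_card_mul_sum_sq (s := Finset.univ) (f := fun i => |x i - y i|)
  unfold multilinearExt
  rw [← Finset.sum_sub_distrib]
  calc _ ≤ ∑ S : Finset (Fin d), M * |(∏ i ∈ S, x i) * ∏ j ∈ Sᶜ, (1 - x j) -
        (∏ i ∈ S, y i) * ∏ j ∈ Sᶜ, (1 - y j)| := by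
        refine (Finset.abs_sum_le_sum_abs _ _).trans (Finset.sum_le_sum fun S _ => ?_)
        rw [← mul_sub, abs_mul]
        exact mul_le_mul_of_nonneg_right (hf S) (abs_nonneg _)
    _ ≤ M * (2 * ∑ i, |x i - y i|) := by
        rw [← Finset.mul_sum]
        exact mul_le_mul_of_nonneg_left hV hM
    _ ≤ M * (2 * (Real.sqrt d * ‖x - y‖)) := by gcongr
    _ = _ := by ring
end

section
/- Let f be a set function on a ground set of size d with |f(S)| ≤ M for every subset S, and let F be its multilinear extension. Then F is 4M√(d(d−1))-smooth on [0,1]^d: ‖∇F(x) − ∇F(y)‖ ≤ 4M√(d(d−1)) · ‖x − y‖ for all x, y ∈ [0,1]^d. -/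
/-- The multilinear extension as a function on the plain function space `Fin d → ℝ`, where
`Function.update` is available, with the two products merged into one. -/
noncomputable def cubeExt {d : ℕ} (f : Finset (Fin d) → ℝ) (x : Fin d → ℝ) : ℝ :=
  ∑ S : Finset (Fin d), f S * ∏ i, if i ∈ S then x i else 1 - x i

lemma multilinearExt_eq_cubeExt {d : ℕ} (f : Finset (Fin d) → ℝ) (x : EuclideanSpace ℝ (Fin d)) :
    multilinearExt d f x = cubeExt f x.ofLp := by
  unfold multilinearExt cubeExt
  refine Finset.sum_congr rfl fun S _ => ?_
  congr 1
  rw [← Finset.prod_mul_prod_compl S (fun i => if i ∈ S then x i else 1 - x i)]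
  congr 1
  · exact Finset.prod_congr rfl fun i hi => by simp [hi]
  · exact Finset.prod_congr rfl fun i hi => by simp [Finset.mem_compl.mp hi]

lemma cubeExt_update {d : ℕ} (f : Finset (Fin d) → ℝ) (x : Fin d → ℝ) (i : Fin d) (a : ℝ) :
    cubeExt f (Function.update x i a) =
      a * cubeExt f (Function.update x i 1) + (1 - a) * cubeExt f (Function.update x i 0) := by
  unfold cubeExt
  rw [Finset.mul_sum, Finset.mul_sum, ← Finset.sum_add_distrib]
  refine Finset.sum_congr rfl fun S _ => ?_
  have key : ∀ b : ℝ, (∏ j, if j ∈ S then Function.update x i b j else 1 - Function.update x i b j)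
      = (if i ∈ S then b else 1 - b) *
        ∏ j ∈ Finset.univ.erase i, if j ∈ S then x j else 1 - x j := by
    intro b
    rw [← Finset.mul_prod_erase Finset.univ _ (Finset.mem_univ i)]
    congr 1
    · simp
    · exact Finset.prod_congr rfl fun j hj => by simp [Finset.ne_of_mem_erase hj]
  rw [key a, key 1, key 0]
  split_ifs <;> ring

lemma abs_cubeExt_le {d : ℕ} {M : ℝ} {f : Finset (Fin d) → ℝ} (hf : ∀ S, |f S| ≤ M)
    {x : Fin d → ℝ} (hx : ∀ i, x i ∈ Set.Icc (0 : ℝ) 1) : |cubeExt f x| ≤ M := by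
  have hnn : ∀ S : Finset (Fin d), 0 ≤ ∏ i, if i ∈ S then x i else 1 - x i := fun S =>
    Finset.prod_nonneg fun i _ => by
      have := hx i
      split_ifs
      · exact this.1
      · linarith [this.2]
  -- The weights are the terms in the expansion of `∏ (xᵢ + (1 - xᵢ)) = 1`.
  have hsum : ∑ S : Finset (Fin d), (∏ i, if i ∈ S then x i else 1 - x i) = 1 := by
    have h := Fintype.prod_add x (fun i => 1 - x i)
    simp only [add_sub_cancel, Finset.prod_const_one] at h
    refine Eq.trans (Finset.sum_congr rfl fun S _ => ?_) h.symm
    simp [Finset.prod_ite, Finset.filter_notMem_eq_sdiff,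
      Finset.compl_eq_univ_sdiff]
  calc |cubeExt f x| ≤ ∑ S : Finset (Fin d), |f S * ∏ i, if i ∈ S then x i else 1 - x i| :=
        Finset.abs_sum_le_sum_abs _ _
    _ ≤ ∑ S : Finset (Fin d), M * ∏ i, if i ∈ S then x i else 1 - x i := by
        refine Finset.sum_le_sum fun S _ => ?_
        rw [abs_mul, abs_of_nonneg (hnn S)]
        exact mul_le_mul_of_nonneg_right (hf S) (hnn S)
    _ = M := by rw [← Finset.mul_sum, hsum, mul_one]

lemma update_mem_cube {d : ℕ} {x : Fin d → ℝ} (hx : ∀ i, x i ∈ Set.Icc (0 : ℝ) 1) (i : Fin d)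
    {a : ℝ} (ha : a ∈ Set.Icc (0 : ℝ) 1) : ∀ j, Function.update x i a j ∈ Set.Icc (0 : ℝ) 1 := by
  intro j
  by_cases h : j = i
  · subst h; simpa using ha
  · simpa [h] using hx j

/-- On the cube, `F` is `2M`-Lipschitz for the `ℓ¹` distance. -/
lemma abs_cubeExt_sub_le {d : ℕ} {M : ℝ} {f : Finset (Fin d) → ℝ} (hf : ∀ S, |f S| ≤ M)
    {x y : Fin d → ℝ} (hx : ∀ i, x i ∈ Set.Icc (0 : ℝ) 1) (hy : ∀ i, y i ∈ Set.Icc (0 : ℝ) 1) :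
    |cubeExt f x - cubeExt f y| ≤ 2 * M * ∑ j, |x j - y j| := by
  -- The hybrid point `T.piecewise x y` interpolates between `y` and `x` as `T` grows.
  have main : ∀ T : Finset (Fin d),
      |cubeExt f (T.piecewise x y) - cubeExt f y| ≤ 2 * M * ∑ j ∈ T, |x j - y j| := by
    intro T
    induction T using Finset.induction_on with
    | empty => simp
    | insert j T hj ih =>
      set z := T.piecewise x y with hz
      have hzc : ∀ i, z i ∈ Set.Icc (0 : ℝ) 1 := fun i => by
        by_cases h : i ∈ T
        · simpa [hz, h] using hx i
        · simpa [hz, h] using hy i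
      have hzj : z j = y j := by simp [hz, hj]
      have e1 := cubeExt_update f z j (x j)
      have e2 := cubeExt_update f z j (z j)
      rw [Function.update_eq_self, hzj] at e2
      have b1 := abs_cubeExt_le hf (update_mem_cube hzc j (a := 1) (by simp))
      have b0 := abs_cubeExt_le hf (update_mem_cube hzc j (a := 0) (by simp))
      have hstep : |cubeExt f (Function.update z j (x j)) - cubeExt f z| ≤
          2 * M * |x j - y j| := by
        have : cubeExt f (Function.update z j (x j)) - cubeExt f z =
            (cubeExt f (Function.update z j 1) - cubeExt f (Function.update z j 0)) *
              (x j - y j) := by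
          rw [e1, e2]; ring
        rw [this, abs_mul]
        refine mul_le_mul_of_nonneg_right ?_ (abs_nonneg _)
        linarith [abs_sub (cubeExt f (Function.update z j 1)) (cubeExt f (Function.update z j 0))]
      rw [Finset.piecewise_insert, Finset.sum_insert hj, mul_add]
      linarith [abs_sub_le (cubeExt f (Function.update z j (x j))) (cubeExt f z) (cubeExt f y)]
  simpa using main Finset.univ

lemma gradient_multilinearExt_apply {d : ℕ} (f : Finset (Fin d) → ℝ)
    (x : EuclideanSpace ℝ (Fin d)) (i : Fin d) :
    gradient (multilinearExt d f) x i =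
      cubeExt f (Function.update x.ofLp i 1) - cubeExt f (Function.update x.ofLp i 0) := by
  have hdiff : DifferentiableAt ℝ (multilinearExt d f) x := by
    unfold multilinearExt
    fun_prop
  have h1 : gradient (multilinearExt d f) x i =
      fderiv ℝ (multilinearExt d f) x (EuclideanSpace.single i 1) := by
    rw [← inner_gradient_left, EuclideanSpace.inner_single_right]
    simp
  have h2 := hdiff.hasFDerivAt.hasLineDerivAt (EuclideanSpace.single i 1)
  unfold HasLineDerivAt at h2
  have h3 : (fun t : ℝ => multilinearExt d f (x + t • EuclideanSpace.single i (1 : ℝ))) =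
      fun t => (x i + t) * cubeExt f (Function.update x.ofLp i 1) +
        (1 - (x i + t)) * cubeExt f (Function.update x.ofLp i 0) := by
    funext t
    rw [multilinearExt_eq_cubeExt, ← cubeExt_update]
    congr 1
    ext j
    by_cases h : j = i
    · subst h; simp
    · simp [h]
  rw [h3] at h2
  have h4 : HasDerivAt (fun t : ℝ => (x i + t) * cubeExt f (Function.update x.ofLp i 1) +
      (1 - (x i + t)) * cubeExt f (Function.update x.ofLp i 0))
      (1 * cubeExt f (Function.update x.ofLp i 1) +
        (-1) * cubeExt f (Function.update x.ofLp i 0)) 0 := by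
    have ha : HasDerivAt (fun t : ℝ => x i + t) 1 0 := (hasDerivAt_id' 0).const_add _
    exact (ha.mul_const _).add ((ha.const_sub 1).mul_const _)
  rw [h1, h2.unique h4]
  ring

theorem multilinearExt_smooth (d : ℕ) (M : ℝ) (f : Finset (Fin d) → ℝ)
    (hf : ∀ S : Finset (Fin d), |f S| ≤ M) :
    ∀ x y : EuclideanSpace ℝ (Fin d),
      (∀ i, x i ∈ Set.Icc (0 : ℝ) 1) → (∀ i, y i ∈ Set.Icc (0 : ℝ) 1) →
      ‖gradient (multilinearExt d f) x - gradient (multilinearExt d f) y‖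
        ≤ 4 * M * Real.sqrt ((d : ℝ) * ((d : ℝ) - 1)) * ‖x - y‖ := by
  intro x y hx hy
  have hM : 0 ≤ M := (abs_nonneg _).trans (hf ∅)
  have hcoord : ∀ i : Fin d,
      (gradient (multilinearExt d f) x i - gradient (multilinearExt d f) y i) ^ 2 ≤
        (4 * M) ^ 2 * (((d : ℝ) - 1) * ‖x - y‖ ^ 2) := by
    intro i
    set s := ∑ j ∈ Finset.univ.erase i, |x j - y j| with hs
    have hlip : ∀ a ∈ Set.Icc (0 : ℝ) 1,
        |cubeExt f (Function.update x.ofLp i a) - cubeExt f (Function.update y.ofLp i a)| ≤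
          2 * M * s := by
      intro a ha
      refine (abs_cubeExt_sub_le hf (update_mem_cube hx i ha) (update_mem_cube hy i ha)).trans_eq ?_
      rw [← Finset.add_sum_erase _ _ (Finset.mem_univ i), hs]
      congr 1
      simp only [Function.update_self, sub_self, abs_zero, zero_add]
      exact Finset.sum_congr rfl fun j hj => by simp [Finset.ne_of_mem_erase hj]
    have hs2 : s ^ 2 ≤ ((d : ℝ) - 1) * ‖x - y‖ ^ 2 := by
      have hd : ((Finset.univ.erase i).card : ℝ) = (d : ℝ) - 1 := by
        rw [Finset.card_erase_of_mem (Finset.mem_univ i), Finset.card_univ, Fintype.card_fin,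
          Nat.cast_sub i.pos, Nat.cast_one]
      have hcs := sq_sum_le_card_mul_sum_sq (s := Finset.univ.erase i) (f := fun j => |x j - y j|)
      rw [hd] at hcs
      refine hcs.trans (mul_le_mul_of_nonneg_left ?_ (hd ▸ Nat.cast_nonneg _))
      rw [EuclideanSpace.norm_sq_eq]
      simp only [PiLp.sub_apply, Real.norm_eq_abs]
      exact Finset.sum_le_sum_of_subset_of_nonneg (Finset.erase_subset _ _)
        fun _ _ _ => sq_nonneg _
    have h1 := abs_le.mp (hlip 1 (by simp))
    have h0 := abs_le.mp (hlip 0 (by simp))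
    rw [gradient_multilinearExt_apply, gradient_multilinearExt_apply]
    refine (sq_le_sq' (b := 4 * M * s) (by linarith [h1.1, h0.2]) (by linarith [h1.2, h0.1])).trans ?_
    rw [mul_pow]
    exact mul_le_mul_of_nonneg_left hs2 (sq_nonneg _)
  have hdd : 0 ≤ (d : ℝ) * ((d : ℝ) - 1) := by
    rcases Nat.eq_zero_or_pos d with h | h
    · simp [h]
    · have : (1 : ℝ) ≤ d := by exact_mod_cast h
      exact mul_nonneg (by linarith) (by linarith)
  refine (sq_le_sq₀ (norm_nonneg _) (by positivity)).mp ?_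
  rw [mul_pow, mul_pow, Real.sq_sqrt hdd, EuclideanSpace.norm_sq_eq]
  simp only [PiLp.sub_apply, Real.norm_eq_abs, sq_abs]
  refine (Finset.sum_le_sum fun i _ => hcoord i).trans_eq ?_
  rw [Finset.sum_const, Finset.card_univ, Fintype.card_fin, nsmul_eq_mul]
  ring
end

section
/- Let f be a submodular set function on a ground set of size d, i.e., f(A ∪ {x}) − f(A) ≥ f(B ∪ {x}) − f(B) for all A ⊆ B ⊆ [d] and x ∈ [d] \ B. Then its multilinear extension F is DR-submodular on [0,1]^d: for all x, y ∈ [0,1]^d with x ≤ y componentwise, ∇F(x) ≥ ∇F(y) componentwise. -/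
/-- The discrete derivative of the set function `f` in direction `i`. Erasing `i` in the second
term makes it independent of whether `i ∈ S`. -/
def discreteDiff {d : ℕ} (f : Finset (Fin d) → ℝ) (i : Fin d) (S : Finset (Fin d)) : ℝ :=
  f (insert i S) - f (S.erase i)

/-- Conditioning on whether `i` belongs to the random set: the product over the remaining
coordinates does not involve `x i`. -/
lemma multilinearExt_eq_sum_erase {d : ℕ} (f : Finset (Fin d) → ℝ) (i : Fin d)
    (x : EuclideanSpace ℝ (Fin d)) :
    multilinearExt d f x = ∑ S ∈ (Finset.univ.erase i).powerset,
      ((1 - x i) * f S + x i * f (insert i S)) *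
        ((∏ j ∈ S, x j) * ∏ j ∈ (insert i S)ᶜ, (1 - x j)) := by
  unfold multilinearExt
  rw [← Finset.powerset_univ, ← Finset.insert_erase (Finset.mem_univ i),
    Finset.sum_powerset_insert (Finset.notMem_erase i _), ← Finset.sum_add_distrib,
    Finset.insert_erase (Finset.mem_univ i)]
  refine Finset.sum_congr rfl fun S hS => ?_
  have hi : i ∉ S := fun h => Finset.notMem_erase i _ (Finset.mem_powerset.1 hS h)
  have hc : Sᶜ = insert i (insert i S)ᶜ := by
    ext j
    by_cases hj : j = i <;> simp [hj, hi]
  rw [hc, Finset.prod_insert (by simp), Finset.prod_insert hi]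
  ring

/-- Affineness in the coordinate `i`, with the slope identified as the multilinear extension
of the discrete derivative. -/
lemma multilinearExt_sub_of_eq_off {d : ℕ} (f : Finset (Fin d) → ℝ) (i : Fin d)
    (x y : EuclideanSpace ℝ (Fin d)) (h : ∀ j, j ≠ i → y j = x j) :
    multilinearExt d f y - multilinearExt d f x =
      (y i - x i) * multilinearExt d (discreteDiff f i) x := by
  simp only [multilinearExt_eq_sum_erase _ i]
  rw [← Finset.sum_sub_distrib, Finset.mul_sum]
  refine Finset.sum_congr rfl fun S hS => ?_
  have hi : i ∉ S := fun h => Finset.notMem_erase i _ (Finset.mem_powerset.1 hS h)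
  have h1 : ∏ j ∈ S, y j = ∏ j ∈ S, x j :=
    Finset.prod_congr rfl fun j hj => h j fun e => hi (e ▸ hj)
  have h2 : ∏ j ∈ (insert i S)ᶜ, (1 - y j) = ∏ j ∈ (insert i S)ᶜ, (1 - x j) :=
    Finset.prod_congr rfl fun j hj => by
      rw [h j]
      rintro rfl
      simp at hj
  simp only [discreteDiff, Finset.insert_idem, Finset.erase_insert hi,
    Finset.erase_eq_of_notMem hi, h1, h2]
  ring

lemma multilinearExt_nonpos {d : ℕ} {g : Finset (Fin d) → ℝ} (hg : ∀ S, g S ≤ 0)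
    {x : EuclideanSpace ℝ (Fin d)} (hx : ∀ i, x i ∈ Set.Icc (0 : ℝ) 1) :
    multilinearExt d g x ≤ 0 :=
  Finset.sum_nonpos fun S _ => mul_nonpos_of_nonpos_of_nonneg (hg S)
    (mul_nonneg (Finset.prod_nonneg fun i _ => (hx i).1)
      (Finset.prod_nonneg fun i _ => sub_nonneg.2 (hx i).2))

/-- The multilinear extension of an antitone set function is antitone on the cube. -/
lemma multilinearExt_anti {d : ℕ} {g : Finset (Fin d) → ℝ} (hg : Antitone g)
    {x y : EuclideanSpace ℝ (Fin d)} (hx : ∀ i, x i ∈ Set.Icc (0 : ℝ) 1)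
    (hy : ∀ i, y i ∈ Set.Icc (0 : ℝ) 1) (hxy : ∀ i, x i ≤ y i) :
    multilinearExt d g y ≤ multilinearExt d g x := by
  -- Raise the coordinates in `T` from `x` to `y`, one at a time.
  have key : ∀ T : Finset (Fin d),
      multilinearExt d g (WithLp.toLp 2 fun j => if j ∈ T then y j else x j) ≤
        multilinearExt d g x := by
    intro T
    induction T using Finset.induction_on with
    | empty => simp
    | insert i T hi ih =>
      refine le_trans (sub_nonpos.1 ?_) ih
      rw [multilinearExt_sub_of_eq_off g i]
      · refine mul_nonpos_of_nonneg_of_nonpos (by simpa [hi] using hxy i)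
          (multilinearExt_nonpos (fun S => ?_) fun j => ?_)
        · exact sub_nonpos.2 (hg ((Finset.erase_subset i S).trans (Finset.subset_insert i S)))
        · by_cases hj : j ∈ T
          · simpa [hj] using hy j
          · simpa [hj] using hx j
      · intro j hj
        simp [hj]
  simpa using key Finset.univ

lemma differentiable_multilinearExt {d : ℕ} (f : Finset (Fin d) → ℝ) :
    Differentiable ℝ (multilinearExt d f) := by
  unfold multilinearExt
  fun_prop

/-- The partial derivatives of a multilinear extension are the multilinear extensions of the
discrete derivatives. -/
lemma gradient_multilinearExt {d : ℕ} (f : Finset (Fin d) → ℝ)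
    (x : EuclideanSpace ℝ (Fin d)) (i : Fin d) :
    gradient (multilinearExt d f) x i = multilinearExt d (discreteDiff f i) x := by
  have h1 : gradient (multilinearExt d f) x i =
      fderiv ℝ (multilinearExt d f) x (EuclideanSpace.single i 1) := by
    have h := InnerProductSpace.toDual_symm_apply (𝕜 := ℝ)
      (x := EuclideanSpace.single i (1 : ℝ)) (y := fderiv ℝ (multilinearExt d f) x)
    rw [EuclideanSpace.inner_single_right] at h
    simpa [gradient] using h
  have h2 := (differentiable_multilinearExt f x).hasFDerivAt.hasLineDerivAt
    (EuclideanSpace.single i (1 : ℝ))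
  have h3 : HasLineDerivAt ℝ (multilinearExt d f) (multilinearExt d (discreteDiff f i) x) x
      (EuclideanSpace.single i (1 : ℝ)) := by
    have hline : (fun t : ℝ => multilinearExt d f (x + t • EuclideanSpace.single i (1 : ℝ))) =
        fun t => t * multilinearExt d (discreteDiff f i) x + multilinearExt d f x := by
      funext t
      have h := multilinearExt_sub_of_eq_off f i x (x + t • EuclideanSpace.single i (1 : ℝ))
        (fun j hj => by simp [hj])
      simp only [PiLp.add_apply, PiLp.smul_apply, PiLp.single_apply, if_true,
        smul_eq_mul, mul_one, add_sub_cancel_left] at h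
      linarith
    unfold HasLineDerivAt
    rw [hline]
    simpa using ((hasDerivAt_id (0 : ℝ)).mul_const
      (multilinearExt d (discreteDiff f i) x)).add_const (multilinearExt d f x)
  rw [h1]
  exact HasDerivAt.unique h2 h3

/-- Submodularity is diminishing returns: every discrete derivative is antitone. -/
lemma antitone_discreteDiff {d : ℕ} {f : Finset (Fin d) → ℝ}
    (hsub : ∀ A B : Finset (Fin d), A ⊆ B → ∀ e : Fin d, e ∉ B →
      f (insert e B) - f B ≤ f (insert e A) - f A) (i : Fin d) :
    Antitone (discreteDiff f i) := by
  intro A B hAB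
  have ins : ∀ S : Finset (Fin d), insert i (S.erase i) = insert i S := by
    intro S
    ext j
    by_cases hj : j = i <;> simp [hj]
  simpa only [discreteDiff, ins] using
    hsub (A.erase i) (B.erase i) (Finset.erase_subset_erase i hAB) i (Finset.notMem_erase i B)

theorem multilinearExt_DR_submodular (d : ℕ) (f : Finset (Fin d) → ℝ)
    (hsub : ∀ A B : Finset (Fin d), A ⊆ B → ∀ e : Fin d, e ∉ B →
      f (insert e B) - f B ≤ f (insert e A) - f A) :
    ∀ x y : EuclideanSpace ℝ (Fin d),
      (∀ i, x i ∈ Set.Icc (0 : ℝ) 1) → (∀ i, y i ∈ Set.Icc (0 : ℝ) 1) →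
      (∀ i, x i ≤ y i) →
      ∀ i, gradient (multilinearExt d f) y i ≤ gradient (multilinearExt d f) x i := by
  intro x y hx hy hxy i
  rw [gradient_multilinearExt, gradient_multilinearExt]
  exact multilinearExt_anti (antitone_discreteDiff hsub i) hx hy hxy
end

section
/- Let T ≥ 4 be an integer, let A, B ≥ 0, and let h_1, …, h_{T+1} be non-negative reals satisfying h_{t+1} ≤ (1 − 1/T)·h_t + A/(T·(t+4)^{1/3}) + B/T² for every t = 1, …, T. Then h_{T+1} ≤ e^{−1}·h_1 + 3A/T^{1/3} + B/T. -/
/-!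
Unrolling the recursion multiplies `h 1` by `(1 - 1/T)^T ≤ e⁻¹`. In the forcing terms the
contraction factors are bounded by `1`: the `B`-terms then add up to `T · B/T² = B/T`, and the
`A`-terms to `(A/T) ∑ (s+4)^{-1/3}`. The last sum is compared with `∫ x^{-1/3} = (3/2) x^{2/3}`
by telescoping (`cbrt_inv_step`), and `(3/2) (T+4)^{2/3} ≤ 3 T^{2/3}` because `T + 4 ≤ 2T`.
-/

lemma cbrt_pow_three {x : ℝ} (hx : 0 ≤ x) : (x ^ ((1 : ℝ) / 3)) ^ 3 = x := by
  rw [← Real.rpow_natCast, ← Real.rpow_mul hx]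
  norm_num

/-- One telescoping step for `∑ x^{-1/3}`, with `a = (x-1)^{1/3}` and `b = x^{1/3}`.
After clearing denominators it reads `0 ≤ (b - a)² (b + 2a)`. -/
lemma cbrt_inv_step {a b : ℝ} (ha : 0 ≤ a) (hb : 0 < b) (hab : b ^ 3 - a ^ 3 = 1) :
    3 / 2 * a ^ 2 + 1 / b ≤ 3 / 2 * b ^ 2 := by
  have h1 : 0 ≤ (b - a) ^ 2 * (b + 2 * a) := by positivity
  have h2 : 1 / b ≤ 3 / 2 * b ^ 2 - 3 / 2 * a ^ 2 := by
    rw [div_le_iff₀ hb]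
    nlinarith
  linarith

theorem recursion_bound (T : ℕ) (hT : 4 ≤ T) (A B : ℝ) (hA : 0 ≤ A) (hB : 0 ≤ B)
    (h : ℕ → ℝ)
    (hnn : ∀ t, 1 ≤ t → t ≤ T + 1 → 0 ≤ h t)
    (hrec : ∀ t, 1 ≤ t → t ≤ T →
      h (t + 1) ≤ (1 - 1 / (T : ℝ)) * h t
        + A / ((T : ℝ) * ((t : ℝ) + 4) ^ ((1 : ℝ) / 3)) + B / (T : ℝ) ^ 2) :
    h (T + 1) ≤ Real.exp (-1) * h 1 + 3 * A / (T : ℝ) ^ ((1 : ℝ) / 3) + B / T := by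
  have hT4 : (4 : ℝ) ≤ T := by exact_mod_cast hT
  have hT0 : (0 : ℝ) < T := by linarith
  have hq1 : 1 - 1 / (T : ℝ) ≤ 1 := by
    have : 0 ≤ 1 / (T : ℝ) := by positivity
    linarith
  have hq0 : 0 ≤ 1 - 1 / (T : ℝ) := by
    rw [sub_nonneg, div_le_one hT0]
    linarith
  have key : ∀ t : ℕ, t ≤ T → h (t + 1) ≤ (1 - 1 / (T : ℝ)) ^ t * h 1
      + A / T * (3 / 2 * (((t : ℝ) + 4) ^ ((1 : ℝ) / 3)) ^ 2) + t * (B / (T : ℝ) ^ 2) := by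
    intro t
    induction t with
    | zero =>
      intro _
      have : 0 ≤ A / T * (3 / 2 * ((((0 : ℕ) : ℝ) + 4) ^ ((1 : ℝ) / 3)) ^ 2) := by positivity
      simp only [zero_add, pow_zero, one_mul, Nat.cast_zero, zero_mul, add_zero] at this ⊢
      linarith
    | succ t ih =>
      intro ht
      have ih := ih (by omega)
      have hr := hrec (t + 1) (by omega) ht
      have ha3 := cbrt_pow_three (x := (t : ℝ) + 4) (by positivity)
      have hb3 := cbrt_pow_three (x := ((t + 1 : ℕ) : ℝ) + 4) (by positivity)
      have ha : 0 ≤ ((t : ℝ) + 4) ^ ((1 : ℝ) / 3) := by positivity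
      have hb : 0 < (((t + 1 : ℕ) : ℝ) + 4) ^ ((1 : ℝ) / 3) := by positivity
      set a := ((t : ℝ) + 4) ^ ((1 : ℝ) / 3)
      set b := (((t + 1 : ℕ) : ℝ) + 4) ^ ((1 : ℝ) / 3)
      have hstep := mul_le_mul_of_nonneg_left
        (cbrt_inv_step ha hb (by rw [ha3, hb3]; push_cast; ring)) (div_nonneg hA hT0.le)
      have hm := mul_le_mul_of_nonneg_left ih hq0
      have hf : (1 - 1 / (T : ℝ)) * (A / T * (3 / 2 * a ^ 2) + t * (B / (T : ℝ) ^ 2))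
          ≤ A / T * (3 / 2 * a ^ 2) + t * (B / (T : ℝ) ^ 2) :=
        mul_le_of_le_one_left (by positivity) hq1
      have he : A / (T * b) = A / T * (1 / b) := by
        rw [div_mul_div_comm, mul_one]
      rw [he] at hr
      rw [pow_succ]
      push_cast
      linarith
  have hfin := key T le_rfl
  have hexp : (1 - 1 / (T : ℝ)) ^ T * h 1 ≤ Real.exp (-1) * h 1 :=
    mul_le_mul_of_nonneg_right
      (Real.one_sub_div_pow_le_exp_neg (by linarith)) (hnn 1 le_rfl (by omega))
  have hBe : (T : ℝ) * (B / (T : ℝ) ^ 2) = B / T := by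
    field_simp
  have hc3 := cbrt_pow_three hT0.le
  have hb3 := cbrt_pow_three (x := (T : ℝ) + 4) (by positivity)
  have hc : 0 < (T : ℝ) ^ ((1 : ℝ) / 3) := by positivity
  have hb : 0 ≤ ((T : ℝ) + 4) ^ ((1 : ℝ) / 3) := by positivity
  set c := (T : ℝ) ^ ((1 : ℝ) / 3)
  set b := ((T : ℝ) + 4) ^ ((1 : ℝ) / 3)
  -- `b³ ≤ 2c³ ≤ (4c/3)³`, and `(4/3)² ≤ 2`.
  have hbc : b ≤ 4 / 3 * c := by
    apply le_of_pow_le_pow_left₀ (n := 3) (by norm_num) (by positivity)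
    rw [mul_pow, hb3, hc3]
    linarith
  have hb2 : b ^ 2 ≤ 2 * c ^ 2 := by nlinarith
  have hAe : A / T * (3 * c ^ 2) = 3 * A / c := by
    rw [← hc3]
    field_simp
  have hAle : A / T * (3 / 2 * b ^ 2) ≤ A / T * (3 * c ^ 2) :=
    mul_le_mul_of_nonneg_left (by linarith) (by positivity)
  linarith
end
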